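/- Existence of a supersolution barrier: there exist a constant C₁ > 0 and a continuous radial function φ₁ : ℝⁿ → ℝ (i.e. φ₁(x) = g(|x|) for some g : [0,∞) → ℝ) such that: (a) for every x with 1 < |x| < 4, the value (−Δ)^s φ₁(x) exists and is ≥ 1; (b) φ₁(x) = 0 for every x with |x| ≤ 1; (c) 0 ≤ φ₁(x) ≤ C₁ (|x| − 1)^s for every x with 1 < |x| < 4; and (d) 1 ≤ φ₁(x) ≤ C₁ for every x with |x| ≥ 4. -/

import Mathlib

open MeasureTheory Metric Set Filter

/-- `fracLapEq n s u x g` : the integral fractional Laplacian `(−Δ)^s u(x)` exists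
(as a principal value) and equals `g`. -/
def fracLapEq (n : ℕ) (s : ℝ) (u : EuclideanSpace ℝ (Fin n) → ℝ)
    (x : EuclideanSpace ℝ (Fin n)) (g : ℝ) : Prop :=
  Tendsto (fun ε : ℝ =>
      (2 ^ (2 * s) * s * Real.Gamma (s + n / 2) /
          (Real.pi ^ ((n : ℝ) / 2) * Real.Gamma (1 - s))) *
        ∫ y in {y : EuclideanSpace ℝ (Fin n) | ε < dist y x},
          (u x - u y) / dist x y ^ ((n : ℝ) + 2 * s))
    (nhdsWithin 0 (Ioi 0)) (nhds g)

open Module Asymptotics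
open scoped Topology RealInnerProductSpace

/-!
The barrier is `Φ(μ w₊ ^ (s / 2))` with `w y = (|y|² - 1) / 2`, where `Φ` increases from `0` to `1`
and is strictly concave as a function of the square of its argument until it reaches `1`.
Around a point `x` with `q = w x > 0` one has `w (x + z) = q + ⟪x, z⟫ + |z|² / 2`.

The tangent inequality for `Φ` compares the contribution of the affine part `q + ⟪x, z⟫` with the
half-space power `(q + ⟪x, z⟫)₊ ^ s`, whose fractional Laplacian at the origin is nonnegative: in
polar coordinates this is a one-dimensional computation. Strict concavity leaves a gain of order
`μ³ q ^ (-s / 2)` from the half-space where `q + ⟪x, z⟫ ≤ 0`, whereas the quadratic part `|z|² / 2`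
costs at most order `μ² q ^ (-η)` with `η ≤ s / 2`, so the gain wins once `μ` is large. Where `Φ`
has already reached `1` the point is a global maximum, and the unit ball, on which the
barrier vanishes, bounds the fractional Laplacian from below. A final scaling makes the lower
bound `1`.
-/

theorem setIntegral_lt_norm_eq_half_integral_add_neg {E : Type*} [NormedAddCommGroup E]
    [MeasurableSpace E] [BorelSpace E] {ν : Measure E} [ν.IsNegInvariant] {f : E → ℝ} {ε : ℝ}
    (hf : IntegrableOn f {z | ε < ‖z‖} ν) :
    ∫ z in {z | ε < ‖z‖}, f z ∂ν = 2⁻¹ * ∫ z in {z | ε < ‖z‖}, (f z + f (-z)) ∂ν := by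
  have hneg := Measure.measurePreserving_neg ν
  have hemb : MeasurableEmbedding (Neg.neg : E → E) := (MeasurableEquiv.neg E).measurableEmbedding
  have hsymm : Neg.neg ⁻¹' {z : E | ε < ‖z‖} = {z | ε < ‖z‖} := by simp
  have hf_neg : IntegrableOn (fun z => f (-z)) {z | ε < ‖z‖} ν := by
    simpa only [hsymm, Function.comp_def] using
      (hneg.integrableOn_comp_preimage hemb (s := {z | ε < ‖z‖})).2 hf
  have hint_neg : ∫ z in {z | ε < ‖z‖}, f (-z) ∂ν = ∫ z in {z | ε < ‖z‖}, f z ∂ν := by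
    simpa only [hsymm] using hneg.setIntegral_preimage_emb hemb f {z | ε < ‖z‖}
  rw [integral_add hf hf_neg, hint_neg]
  ring

section SingularKernels

variable {E : Type*} [NormedAddCommGroup E] [NormedSpace ℝ E] [FiniteDimensional ℝ E]
  [MeasurableSpace E] [BorelSpace E] {ν : Measure E} [ν.IsAddHaarMeasure]

theorem integrableOn_div_norm_rpow_of_norm_le {f : E → ℝ} {A α β ε : ℝ} (hε : 0 < ε) (hβ : 0 ≤ β)
    (hαβ : finrank ℝ E + α < β) (hf : AEStronglyMeasurable f ν)
    (hfA : ∀ z, |f z| ≤ A * (1 + ‖z‖) ^ α) :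
    IntegrableOn (fun z => f z / ‖z‖ ^ β) {z | ε < ‖z‖} ν := by
  have hdecay : Integrable (fun z : E => (1 + ‖z‖) ^ (-(β - α))) ν :=
    integrable_one_add_norm (by linarith)
  have hmeas : AEStronglyMeasurable (fun z => f z / ‖z‖ ^ β) ν :=
    hf.div₀ (by fun_prop : Measurable fun z : E => ‖z‖ ^ β).aestronglyMeasurable
  refine (hdecay.const_mul (A * (ε / (1 + ε)) ^ (-β))).integrableOn.mono' hmeas.restrict ?_
  refine (ae_restrict_mem (measurableSet_lt measurable_const measurable_norm)).mono fun z hz => ?_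
  have hεz : ε < ‖z‖ := hz
  have hz0 : 0 < ‖z‖ := hε.trans hεz
  have hnorm : ε / (1 + ε) * (1 + ‖z‖) ≤ ‖z‖ := by
    rw [div_mul_eq_mul_div, div_le_iff₀ (by positivity)]
    linarith
  calc ‖f z / ‖z‖ ^ β‖ = |f z| * ‖z‖ ^ (-β) := by
        rw [norm_div, Real.norm_eq_abs, Real.norm_of_nonneg (by positivity), div_eq_mul_inv,
          ← Real.rpow_neg hz0.le]
    _ ≤ A * (1 + ‖z‖) ^ α * (ε / (1 + ε) * (1 + ‖z‖)) ^ (-β) :=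
        mul_le_mul (hfA z) (Real.rpow_le_rpow_of_nonpos (by positivity) hnorm (by linarith))
          (by positivity) ((abs_nonneg _).trans (hfA z))
    _ = A * (ε / (1 + ε)) ^ (-β) * (1 + ‖z‖) ^ (-(β - α)) := by
        rw [Real.mul_rpow (by positivity) (by positivity), neg_sub, sub_eq_add_neg,
          Real.rpow_add (by positivity)]
        ring

theorem integrable_div_norm_rpow_of_isBigO [Nontrivial E] {f : E → ℝ} {A α β γ : ℝ} (hβ : 0 < β)
    (hαβ : finrank ℝ E + α < β) (hβγ : β < finrank ℝ E + γ) (hf : AEStronglyMeasurable f ν)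
    (hfA : ∀ z, |f z| ≤ A * (1 + ‖z‖) ^ α) (hfγ : f =O[𝓝 0] fun z => ‖z‖ ^ γ) :
    Integrable (fun z => f z / ‖z‖ ^ β) ν := by
  obtain ⟨C, hC⟩ := hfγ.bound
  obtain ⟨r, hr, hball⟩ := Metric.eventually_nhds_iff_ball.1 hC
  have hnear : IntegrableOn (fun z => f z / ‖z‖ ^ β) (ball 0 r) ν := by
    refine integrableOn_ball_of_norm_le_rpow (C := C) (α := β - γ) finrank_pos (by linarith) ?_
      (hf.div₀ (by fun_prop : Measurable fun z : E => ‖z‖ ^ β).aestronglyMeasurable)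
    filter_upwards [ae_restrict_mem measurableSet_ball,
      ae_restrict_of_ae (compl_mem_ae_iff.2 (measure_singleton (0 : E)))] with z hz hz0
    have hz0 : 0 < ‖z‖ := norm_pos_iff.2 hz0
    have hfz := hball z hz
    rw [Real.norm_of_nonneg (Real.rpow_nonneg hz0.le γ)] at hfz
    rw [norm_div, Real.norm_of_nonneg (Real.rpow_nonneg hz0.le β), neg_sub, Real.rpow_sub hz0,
      ← mul_div_assoc]
    gcongr
  have hfar : IntegrableOn (fun z => f z / ‖z‖ ^ β) {z | r / 2 < ‖z‖} ν :=
    integrableOn_div_norm_rpow_of_norm_le (half_pos hr) hβ.le hαβ hf hfA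
  have hcover : ball (0 : E) r ∪ {z | r / 2 < ‖z‖} = univ := by
    refine eq_univ_of_forall fun z => ?_
    rcases lt_or_ge ‖z‖ r with hz | hz
    · exact Or.inl (mem_ball_zero_iff.2 hz)
    · exact Or.inr ((half_lt_self hr).trans_le hz)
  rw [← integrableOn_univ, ← hcover]
  exact hnear.union hfar

theorem aecover_lt_norm [Nontrivial E] : AECover ν (𝓝[>] 0) fun ε : ℝ => {z : E | ε < ‖z‖} where
  ae_eventually_mem := by
    filter_upwards [compl_mem_ae_iff.2 (measure_singleton (0 : E))] with z hz
    exact nhdsWithin_le_nhds (gt_mem_nhds (norm_pos_iff.2 hz))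
  measurableSet _ := measurableSet_lt measurable_const measurable_norm

end SingularKernels

theorem measurable_second_difference {E : Type*} [AddGroup E] [MeasurableSpace E]
    [MeasurableAdd E] [MeasurableSub E] {f : E → ℝ} (hf : Measurable f) (x : E) :
    Measurable fun z => 2 * f x - f (x + z) - f (x - z) :=
  (measurable_const.sub (hf.comp (measurable_const_add x))).sub (hf.comp (measurable_const_sub x))

theorem abs_le_mul_one_add_norm_rpow_of_norm_le_add {E : Type*} [SeminormedAddCommGroup E]
    {f : E → ℝ} {A α : ℝ} (hα : 0 ≤ α) (hfA : ∀ y, |f y| ≤ A * (1 + ‖y‖) ^ α) {x y z : E}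
    (hy : ‖y‖ ≤ ‖x‖ + ‖z‖) : |f y| ≤ A * (1 + ‖x‖) ^ α * (1 + ‖z‖) ^ α := by
  have hA : 0 ≤ A := by simpa using (abs_nonneg _).trans (hfA 0)
  rw [mul_assoc, ← Real.mul_rpow (by positivity) (by positivity)]
  refine (hfA y).trans ?_
  gcongr
  nlinarith [mul_nonneg (norm_nonneg x) (norm_nonneg z)]

section SecondDifference

variable {E : Type*} [NormedAddCommGroup E] [NormedSpace ℝ E]

theorem isBigO_add_sub_sub_fderiv {f : E → ℝ} {x : E} (hf : ContDiffAt ℝ 2 f x) :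
    (fun z => f (x + z) - f x - fderiv ℝ f x z) =O[𝓝 0] fun z => ‖z‖ ^ 2 := by
  obtain ⟨K, t, ht, hK⟩ := (hf.fderiv_right (m := 1) le_rfl).exists_lipschitzOnWith
  have hdiff : ∀ᶠ y in 𝓝 x, DifferentiableAt ℝ f y :=
    (hf.eventually (by simp)).mono fun y hy => hy.differentiableAt two_ne_zero
  obtain ⟨r, hr, hball⟩ := Metric.mem_nhds_iff.1 (inter_mem ht hdiff)
  refine IsBigO.of_bound K (eventually_of_mem (ball_mem_nhds 0 hr) fun z hz => ?_)
  have hsub : closedBall x ‖z‖ ⊆ ball x r := closedBall_subset_ball (mem_ball_zero_iff.1 hz)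
  have hx : x ∈ closedBall x ‖z‖ := mem_closedBall_self (norm_nonneg z)
  have hderiv : ∀ y ∈ closedBall x ‖z‖, ‖fderiv ℝ f y - fderiv ℝ f x‖ ≤ K * ‖z‖ := fun y hy =>
    (hK.norm_sub_le (hball (hsub hy)).1 (hball (hsub hx)).1).trans
      (by gcongr; exact mem_closedBall_iff_norm.1 hy)
  have hmvt := (convex_closedBall x ‖z‖).norm_image_sub_le_of_norm_hasFDerivWithin_le'
    (fun y hy => (hball (hsub hy)).2.hasFDerivAt.hasFDerivWithinAt) hderiv hx
    (y := x + z) (by simp)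
  simpa [pow_two, mul_assoc] using hmvt

theorem isBigO_second_difference {f : E → ℝ} {x : E} (hf : ContDiffAt ℝ 2 f x) :
    (fun z => 2 * f x - f (x + z) - f (x - z)) =O[𝓝 0] fun z => ‖z‖ ^ (2 : ℝ) := by
  have hadd := isBigO_add_sub_sub_fderiv hf
  have hneg : Tendsto (fun z : E => -z) (𝓝 0) (𝓝 0) := by
    simpa using continuous_neg.tendsto (0 : E)
  have hsub := hadd.comp_tendsto hneg
  refine ((hadd.add (hsub.congr_right fun z => by simp)).neg_left).congr (fun z => ?_) fun z => ?_
  · simp only [Function.comp_apply, map_neg, ← sub_eq_add_neg]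
    ring
  · rw [Real.rpow_two]

/-- The second difference quotient at `x` whose integral in `z` is, up to a factor depending only
on the dimension and `s`, the fractional Laplacian `(-Δ)^s f x`. At `z = 0` it vanishes. -/
noncomputable def symmDiffQuot (s : ℝ) (f : E → ℝ) (x z : E) : ℝ :=
  (2 * f x - f (x + z) - f (x - z)) / ‖z‖ ^ (finrank ℝ E + 2 * s)

variable [MeasurableSpace E] [BorelSpace E] [FiniteDimensional ℝ E] [Nontrivial E] {ν : Measure E}
  [ν.IsAddHaarMeasure]

theorem integrable_symmDiffQuot {s A α : ℝ} {f : E → ℝ} {x : E} (hs1 : s < 1) (hα : 0 ≤ α)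
    (hαs : α < 2 * s) (hf : Measurable f) (hfA : ∀ y, |f y| ≤ A * (1 + ‖y‖) ^ α)
    (hfx : ContDiffAt ℝ 2 f x) : Integrable (symmDiffQuot s f x) ν := by
  refine integrable_div_norm_rpow_of_isBigO (A := 4 * (A * (1 + ‖x‖) ^ α)) (α := α) (γ := 2)
    (by linarith [(finrank ℝ E).cast_nonneg (α := ℝ)]) (by linarith) (by linarith)
    (measurable_second_difference hf x).aestronglyMeasurable (fun z => ?_)
    (isBigO_second_difference hfx)
  have hx := abs_le_mul_one_add_norm_rpow_of_norm_le_add hα hfA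
    (le_add_of_nonneg_right (norm_nonneg z) : ‖x‖ ≤ ‖x‖ + ‖z‖)
  have hadd := abs_le_mul_one_add_norm_rpow_of_norm_le_add hα hfA (norm_add_le x z)
  have hsub := abs_le_mul_one_add_norm_rpow_of_norm_le_add hα hfA (norm_sub_le x z)
  rw [abs_le] at hx hadd hsub ⊢
  constructor <;> linarith

theorem tendsto_setIntegral_sub_div_norm_rpow {s A α : ℝ} {f : E → ℝ} {x : E} (hs1 : s < 1)
    (hα : 0 ≤ α) (hαs : α < 2 * s) (hf : Measurable f) (hfA : ∀ y, |f y| ≤ A * (1 + ‖y‖) ^ α)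
    (hfx : ContDiffAt ℝ 2 f x) :
    Tendsto (fun ε : ℝ => ∫ z in {z : E | ε < ‖z‖},
        (f x - f (x + z)) / ‖z‖ ^ (finrank ℝ E + 2 * s) ∂ν)
      (𝓝[>] 0) (𝓝 (2⁻¹ * ∫ z, symmDiffQuot s f x z ∂ν)) := by
  have hcover := aecover_lt_norm (ν := ν).integral_tendsto_of_countably_generated
    (integrable_symmDiffQuot hs1 hα hαs hf hfA hfx)
  refine (hcover.const_mul 2⁻¹).congr' ?_
  filter_upwards [self_mem_nhdsWithin] with ε hε
  have hfar : IntegrableOn (fun z => (f x - f (x + z)) / ‖z‖ ^ (finrank ℝ E + 2 * s))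
      {z | ε < ‖z‖} ν := by
    refine integrableOn_div_norm_rpow_of_norm_le (A := 2 * (A * (1 + ‖x‖) ^ α)) (α := α) hε
      (by linarith [(finrank ℝ E).cast_nonneg (α := ℝ)]) (by linarith)
      (measurable_const.sub (hf.comp (measurable_const_add x))).aestronglyMeasurable fun z => ?_
    have hx := abs_le_mul_one_add_norm_rpow_of_norm_le_add hα hfA
      (le_add_of_nonneg_right (norm_nonneg z) : ‖x‖ ≤ ‖x‖ + ‖z‖)
    have hadd := abs_le_mul_one_add_norm_rpow_of_norm_le_add hα hfA (norm_add_le x z)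
    exact (abs_sub _ _).trans (by linarith)
  rw [setIntegral_lt_norm_eq_half_integral_add_neg hfar]
  congr 2 with z
  rw [symmDiffQuot, norm_neg, ← sub_eq_add_neg, ← add_div]
  ring

end SecondDifference

/-- The normalizing constant `C_{n,s}` of the fractional Laplacian on `ℝⁿ`. -/
noncomputable def fracLapConst (n : ℕ) (s : ℝ) : ℝ :=
  2 ^ (2 * s) * s * Real.Gamma (s + n / 2) / (Real.pi ^ ((n : ℝ) / 2) * Real.Gamma (1 - s))

theorem fracLapConst_pos {n : ℕ} {s : ℝ} (hs : s ∈ Ioo (0 : ℝ) 1) : 0 < fracLapConst n s := by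
  have hs0 := hs.1
  have hΓ_sub : 0 < Real.Gamma (1 - s) := Real.Gamma_pos_of_pos (sub_pos.2 hs.2)
  unfold fracLapConst
  positivity

section FracLap

variable {n : ℕ} {s : ℝ} {u : EuclideanSpace ℝ (Fin n) → ℝ} {x : EuclideanSpace ℝ (Fin n)}

theorem fracLapEq.const_mul {g : ℝ} (hu : fracLapEq n s u x g) (M : ℝ) :
    fracLapEq n s (fun y => M * u y) x (M * g) := by
  refine (Tendsto.const_mul M hu).congr fun ε => ?_
  rw [mul_left_comm, ← integral_const_mul]
  simp only [← mul_sub, mul_div_assoc]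

theorem fracLapEq_of_contDiffAt {A α : ℝ} (hn : 0 < n) (hs1 : s < 1) (hα : 0 ≤ α)
    (hαs : α < 2 * s) (hu : Measurable u) (huA : ∀ y, |u y| ≤ A * (1 + ‖y‖) ^ α)
    (hux : ContDiffAt ℝ 2 u x) :
    fracLapEq n s u x (fracLapConst n s * (2⁻¹ * ∫ z, symmDiffQuot s u x z)) := by
  have : Nonempty (Fin n) := ⟨⟨0, hn⟩⟩
  have hpv := tendsto_setIntegral_sub_div_norm_rpow (ν := volume) hs1 hα hαs hu huA hux
  refine (hpv.const_mul _).congr fun ε => congrArg _ ?_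
  symm
  rw [← (measurePreserving_add_left volume x).setIntegral_preimage_emb
    (measurableEmbedding_addLeft x)]
  simp [dist_eq_norm]

end FracLap

section HalfSpacePower

variable {E : Type*} [NormedAddCommGroup E] [InnerProductSpace ℝ E]

/-- The power `(q + ⟪a, y⟫)₊ ^ s` of the distance to the complement of a half-space (up to scaling),
the model `s`-harmonic function of that half-space. -/
noncomputable def halfSpacePow (s q : ℝ) (a y : E) : ℝ :=
  (max (q + ⟪a, y⟫) 0) ^ s

theorem continuous_halfSpacePow {s : ℝ} (hs : 0 ≤ s) (q : ℝ) (a : E) :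
    Continuous (halfSpacePow s q a) :=
  Continuous.rpow_const (by fun_prop) fun _ => Or.inr hs

theorem halfSpacePow_nonneg (s q : ℝ) (a y : E) : 0 ≤ halfSpacePow s q a y :=
  Real.rpow_nonneg (le_max_right _ _) s

theorem halfSpacePow_zero_right {q : ℝ} (hq : 0 ≤ q) (s : ℝ) (a : E) :
    halfSpacePow s q a 0 = q ^ s := by
  rw [halfSpacePow, inner_zero_right, add_zero, max_eq_left hq]

theorem abs_halfSpacePow_le {s q : ℝ} (hs : 0 ≤ s) (a y : E) :
    |halfSpacePow s q a y| ≤ (max |q| ‖a‖) ^ s * (1 + ‖y‖) ^ s := by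
  rw [abs_of_nonneg (halfSpacePow_nonneg s q a y), halfSpacePow,
    ← Real.mul_rpow (by positivity) (by positivity)]
  refine Real.rpow_le_rpow (le_max_right _ _) (max_le ?_ (by positivity)) hs
  calc q + ⟪a, y⟫ ≤ |q| + ‖a‖ * ‖y‖ := add_le_add (le_abs_self q) (real_inner_le_norm a y)
    _ ≤ max |q| ‖a‖ + max |q| ‖a‖ * ‖y‖ := by gcongr <;> simp
    _ = max |q| ‖a‖ * (1 + ‖y‖) := by ring

theorem contDiffAt_halfSpacePow_zero {q : ℝ} (hq : 0 < q) (s : ℝ) (a : E) {k : WithTop ℕ∞} :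
    ContDiffAt ℝ k (halfSpacePow s q a) 0 := by
  have hpos : ∀ᶠ y in 𝓝 (0 : E), 0 < q + ⟪a, y⟫ :=
    (by fun_prop : ContinuousAt (fun y : E => q + ⟪a, y⟫) 0).eventually (lt_mem_nhds (by simpa))
  have hsmooth : ContDiffAt ℝ k (fun y : E => (q + ⟪a, y⟫) ^ s) 0 :=
    (contDiffAt_const.add (contDiffAt_const.inner ℝ contDiffAt_id)).rpow_const_of_ne
      (by simpa using hq.ne')
  refine hsmooth.congr_of_eventuallyEq (hpos.mono fun y hy => ?_)
  rw [halfSpacePow, max_eq_left hy.le]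

theorem integrable_symmDiffQuot_halfSpacePow [FiniteDimensional ℝ E] [MeasurableSpace E]
    [BorelSpace E] [Nontrivial E] {ν : Measure E} [ν.IsAddHaarMeasure] {s q : ℝ}
    (hs : s ∈ Ioo (0 : ℝ) 1) (hq : 0 < q) (a : E) :
    Integrable (symmDiffQuot s (halfSpacePow s q a) 0) ν :=
  integrable_symmDiffQuot hs.2 hs.1.le (by linarith [hs.1])
    (continuous_halfSpacePow hs.1.le q a).measurable (abs_halfSpacePow_le hs.1.le a)
    (contDiffAt_halfSpacePow_zero hq s a)

end HalfSpacePower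

section HalfLine

variable {s ε : ℝ}

theorem hasDerivAt_one_add_rpow_mul_rpow {u : ℝ} (hs : s ≠ 0) (hu : 0 < u) :
    HasDerivAt (fun u : ℝ => -s⁻¹ * ((1 + u) ^ s * u ^ (-2 * s)))
      ((1 + u) ^ s * u ^ (-1 - 2 * s) + (1 + u) ^ (s - 1) * u ^ (-1 - 2 * s)) u := by
  have hadd : HasDerivAt (fun u : ℝ => (1 + u) ^ s) (1 * s * (1 + u) ^ (s - 1)) u :=
    ((hasDerivAt_id u).const_add 1).rpow_const (Or.inl (by positivity))
  have hpow : HasDerivAt (fun u : ℝ => u ^ (-2 * s)) (-2 * s * u ^ (-2 * s - 1)) u :=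
    Real.hasDerivAt_rpow_const (Or.inl hu.ne')
  refine ((hadd.mul hpow).const_mul (-s⁻¹)).congr_deriv ?_
  have hadd_pow : (1 + u) ^ s = (1 + u) ^ (s - 1) * (1 + u) := by
    rw [← Real.rpow_add_one (by positivity), sub_add_cancel]
  have hpow_two : u ^ (-2 * s) = u ^ (-1 - 2 * s) * u := by
    rw [← Real.rpow_add_one hu.ne']
    ring_nf
  rw [hadd_pow, hpow_two, show -2 * s - 1 = -1 - 2 * s by ring]
  field_simp
  ring

theorem tendsto_one_add_rpow_mul_rpow_atTop (hs : 0 < s) :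
    Tendsto (fun u : ℝ => (1 + u) ^ s * u ^ (-2 * s)) atTop (𝓝 0) := by
  have hlim : Tendsto (fun u : ℝ => (2 : ℝ) ^ s * u ^ (-s)) atTop (𝓝 0) := by
    simpa using (tendsto_rpow_neg_atTop hs).const_mul ((2 : ℝ) ^ s)
  refine squeeze_zero' ?_ ?_ hlim
  · filter_upwards [eventually_gt_atTop 0] with u hu
    positivity
  · filter_upwards [eventually_ge_atTop 1] with u hu
    have hu0 : 0 < u := by linarith
    calc (1 + u) ^ s * u ^ (-2 * s) ≤ (2 * u) ^ s * u ^ (-2 * s) := by gcongr; linarith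
      _ = 2 ^ s * u ^ (-s) := by
        rw [Real.mul_rpow zero_le_two hu0.le, mul_assoc, ← Real.rpow_add hu0]
        ring_nf

theorem integrableOn_one_add_rpow_mul_rpow_add (hs : 0 < s) (hε : 0 < ε) :
    IntegrableOn
      (fun u : ℝ => (1 + u) ^ s * u ^ (-1 - 2 * s) + (1 + u) ^ (s - 1) * u ^ (-1 - 2 * s))
      (Ioi ε) :=
  integrableOn_Ioi_deriv_of_nonneg'
    (fun _ hu => hasDerivAt_one_add_rpow_mul_rpow hs.ne' (hε.trans_le hu))
    (fun u hu => by have : 0 < u := hε.trans hu; positivity)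
    ((tendsto_one_add_rpow_mul_rpow_atTop hs).const_mul _)

theorem integral_one_add_rpow_mul_rpow_add (hs : 0 < s) (hε : 0 < ε) :
    ∫ u in Ioi ε, ((1 + u) ^ s * u ^ (-1 - 2 * s) + (1 + u) ^ (s - 1) * u ^ (-1 - 2 * s)) =
      s⁻¹ * ((1 + ε) ^ s * ε ^ (-2 * s)) := by
  rw [integral_Ioi_of_hasDerivAt_of_nonneg'
    (fun _ hu => hasDerivAt_one_add_rpow_mul_rpow hs.ne' (hε.trans_le hu))
    (fun u hu => by have : 0 < u := hε.trans hu; positivity)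
    ((tendsto_one_add_rpow_mul_rpow_atTop hs).const_mul _)]
  ring

theorem integrableOn_one_add_rpow_sub_one_mul_rpow (hs : 0 < s) (hε : 0 < ε) :
    IntegrableOn (fun u : ℝ => (1 + u) ^ (s - 1) * u ^ (-1 - 2 * s)) (Ioi ε) := by
  refine (integrableOn_one_add_rpow_mul_rpow_add hs hε).mono'
    (by fun_prop : Measurable _).aestronglyMeasurable ?_
  filter_upwards [ae_restrict_mem measurableSet_Ioi] with u hu
  have hu0 : 0 < u := hε.trans hu
  rw [Real.norm_of_nonneg (by positivity)]
  exact le_add_of_nonneg_left (by positivity)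

theorem integrableOn_one_add_rpow_mul_rpow (hs : 0 < s) (hε : 0 < ε) :
    IntegrableOn (fun u : ℝ => (1 + u) ^ s * u ^ (-1 - 2 * s)) (Ioi ε) :=
  ((integrableOn_one_add_rpow_mul_rpow_add hs hε).sub
    (integrableOn_one_add_rpow_sub_one_mul_rpow hs hε)).congr_fun
    (fun _ _ => add_sub_cancel_right _ _) measurableSet_Ioi

theorem image_div_one_add_Ioi (hε : 0 < ε) (hε1 : ε < 1) :
    (fun u : ℝ => u / (1 + u)) '' Ioi (ε / (1 - ε)) = Ioo ε 1 := by
  have hsub : 0 < 1 - ε := by linarith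
  ext t
  constructor
  · rintro ⟨u, hu : ε / (1 - ε) < u, rfl⟩
    have hu0 : 0 < u := (div_pos hε hsub).trans hu
    rw [div_lt_iff₀ hsub] at hu
    constructor
    · rw [lt_div_iff₀ (by positivity)]
      linarith
    · rw [div_lt_one (by positivity)]
      linarith
  · rintro ⟨hεt, ht1⟩
    have ht : 0 < 1 - t := by linarith
    refine ⟨t / (1 - t), ?_, ?_⟩
    · rw [mem_Ioi, div_lt_div_iff₀ hsub ht]
      linarith
    · field_simp
      ring

theorem deriv_mul_one_sub_rpow_comp_div_one_add {u : ℝ} (hu : 0 < u) :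
    |1 / (1 + u) ^ 2| • ((1 - u / (1 + u)) ^ s * (u / (1 + u)) ^ (-1 - 2 * s)) =
      (1 + u) ^ (s - 1) * u ^ (-1 - 2 * s) := by
  have hu1 : 0 < 1 + u := by linarith
  have hsub : 1 - u / (1 + u) = (1 + u)⁻¹ := by
    field_simp
    ring
  have hpow : (1 + u) ^ (s - 1) = (1 + u) ^ (-2 : ℝ) * (1 + u) ^ (-s) * (1 + u) ^ (1 + 2 * s) := by
    rw [← Real.rpow_add hu1, ← Real.rpow_add hu1]
    ring_nf
  rw [smul_eq_mul, hsub, abs_of_pos (by positivity), Real.div_rpow hu.le hu1.le,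
    Real.inv_rpow hu1.le, ← Real.rpow_neg hu1.le, one_div, ← Real.rpow_two, ← Real.rpow_neg hu1.le,
    div_eq_mul_inv, ← Real.rpow_neg hu1.le, hpow, show -(-1 - 2 * s) = 1 + 2 * s by ring]
  ring

theorem hasDerivWithinAt_div_one_add {u : ℝ} (hu : 0 < u) (t : Set ℝ) :
    HasDerivWithinAt (fun u : ℝ => u / (1 + u)) (1 / (1 + u) ^ 2) t u := by
  have hdiv := (hasDerivAt_id u).div ((hasDerivAt_id u).const_add 1) (by positivity)
  exact (hdiv.congr_deriv (by simp)).hasDerivWithinAt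

theorem injOn_div_one_add : InjOn (fun u : ℝ => u / (1 + u)) (Ioi 0) := by
  intro u (hu : 0 < u) v (hv : 0 < v) huv
  rw [div_eq_div_iff (by positivity) (by positivity)] at huv
  linarith

theorem integral_max_one_sub_rpow_mul_rpow (hs : s ≠ 0) (hε : 0 < ε) (hε1 : ε < 1) :
    ∫ t in Ioi ε, (max (1 - t) 0) ^ s * t ^ (-1 - 2 * s) =
      ∫ u in Ioi (ε / (1 - ε)), (1 + u) ^ (s - 1) * u ^ (-1 - 2 * s) := by
  have hpos : Ioi (ε / (1 - ε)) ⊆ Ioi 0 := Ioi_subset_Ioi (div_pos hε (by linarith)).le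
  have hzero : ∀ t ∈ Ioi ε \ Ioo ε 1, (max (1 - t) 0) ^ s * t ^ (-1 - 2 * s) = 0 := by
    intro t ht
    have ht1 : 1 ≤ t := not_lt.1 fun h => ht.2 ⟨ht.1, h⟩
    rw [max_eq_right (by linarith), Real.zero_rpow hs, zero_mul]
  calc ∫ t in Ioi ε, (max (1 - t) 0) ^ s * t ^ (-1 - 2 * s)
      = ∫ t in Ioo ε 1, (max (1 - t) 0) ^ s * t ^ (-1 - 2 * s) :=
        setIntegral_eq_of_subset_of_forall_sdiff_eq_zero measurableSet_Ioi Ioo_subset_Ioi_self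
          hzero
    _ = ∫ t in Ioo ε 1, (1 - t) ^ s * t ^ (-1 - 2 * s) :=
        setIntegral_congr_fun measurableSet_Ioo fun t ht => by
          simp only [max_eq_left (sub_nonneg.2 ht.2.le)]
    _ = _ := by
        rw [← image_div_one_add_Ioi hε hε1,
          integral_image_eq_integral_abs_deriv_smul measurableSet_Ioi
            (fun u hu => hasDerivWithinAt_div_one_add (hpos hu) _) (injOn_div_one_add.mono hpos)]
        exact setIntegral_congr_fun measurableSet_Ioi fun u hu =>
          deriv_mul_one_sub_rpow_comp_div_one_add (hpos hu)

theorem integrableOn_max_one_sub_rpow_mul_rpow (hs : 0 < s) (hε : 0 < ε) :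
    IntegrableOn (fun t : ℝ => (max (1 - t) 0) ^ s * t ^ (-1 - 2 * s)) (Ioi ε) := by
  have hmeas : Measurable fun t : ℝ => (max (1 - t) 0) ^ s * t ^ (-1 - 2 * s) := by fun_prop
  refine (integrableOn_Ioi_rpow_of_lt (by linarith : -1 - 2 * s < -1) hε).mono'
    hmeas.aestronglyMeasurable ?_
  filter_upwards [ae_restrict_mem measurableSet_Ioi] with t ht
  have ht0 : 0 < t := hε.trans ht
  rw [Real.norm_of_nonneg (by positivity)]
  exact mul_le_of_le_one_left (by positivity)
    (Real.rpow_le_one (le_max_right _ _) (max_le (by linarith) zero_le_one) hs.le)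

/- The substitution `t = u / (1 + u)` turns the integrand `(1 - t)₊ ^ s * t ^ (-1 - 2 * s)` into
`(1 + u) ^ (s - 1) * u ^ (-1 - 2 * s)`, whose sum with `(1 + u) ^ s * u ^ (-1 - 2 * s)` has an
explicit primitive; the shift of the lower endpoint produces the integral over `Ioc`. -/
theorem integral_Ioi_second_difference_eq (hs : 0 < s) (hε : 0 < ε) (hε1 : ε < 1) :
    ∫ t in Ioi ε, (2 - (1 + t) ^ s - (max (1 - t) 0) ^ s) * t ^ (-1 - 2 * s) =
      s⁻¹ * ε ^ (-2 * s) * (1 - (1 + ε) ^ s) +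
        ∫ u in Ioc ε (ε / (1 - ε)), (1 + u) ^ (s - 1) * u ^ (-1 - 2 * s) := by
  have hle : ε ≤ ε / (1 - ε) := le_div_self hε.le (by linarith) (by linarith)
  have hker : IntegrableOn (fun t : ℝ => t ^ (-1 - 2 * s)) (Ioi ε) :=
    integrableOn_Ioi_rpow_of_lt (by linarith) hε
  have hadd := integrableOn_one_add_rpow_mul_rpow hs hε
  have hadd' := integrableOn_one_add_rpow_sub_one_mul_rpow hs hε
  have hsub := integrableOn_max_one_sub_rpow_mul_rpow hs hε
  have hker_eq : ∫ t in Ioi ε, t ^ (-1 - 2 * s) = ε ^ (-2 * s) / (2 * s) := by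
    rw [integral_Ioi_rpow_of_lt (by linarith) hε, show -1 - 2 * s + 1 = -2 * s by ring, neg_mul,
      neg_div_neg_eq]
  have hprim := integral_one_add_rpow_mul_rpow_add hs hε
  rw [integral_add hadd hadd'] at hprim
  have hsplit := setIntegral_union (Ioc_disjoint_Ioi le_rfl) measurableSet_Ioi
    (hadd'.mono_set Ioc_subset_Ioi_self) (hadd'.mono_set (Ioi_subset_Ioi hle))
  rw [Ioc_union_Ioi_eq_Ioi hle] at hsplit
  have hexpand : ∫ t in Ioi ε, (2 - (1 + t) ^ s - (max (1 - t) 0) ^ s) * t ^ (-1 - 2 * s) =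
      2 * (∫ t in Ioi ε, t ^ (-1 - 2 * s)) - (∫ t in Ioi ε, (1 + t) ^ s * t ^ (-1 - 2 * s)) -
        ∫ t in Ioi ε, (max (1 - t) 0) ^ s * t ^ (-1 - 2 * s) := by
    simp only [sub_mul]
    refine (integral_sub ((hker.const_mul 2).sub hadd) hsub).trans ?_
    rw [integral_sub' (hker.const_mul 2) hadd, integral_const_mul]
  rw [hexpand, hker_eq, integral_max_one_sub_rpow_mul_rpow hs.ne' hε hε1]
  have htwo : 2 * (ε ^ (-2 * s) / (2 * s)) = s⁻¹ * ε ^ (-2 * s) := by field_simp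
  linear_combination htwo - hprim + hsplit

theorem le_integral_Ioc_one_add_rpow_mul_rpow (hs : 0 < s) (hs1 : s ≤ 1) (hε : 0 < ε)
    (hε1 : ε < 1) :
    ε ^ (1 - 2 * s) * (1 - ε) ^ (1 + s) ≤
      ∫ u in Ioc ε (ε / (1 - ε)), (1 + u) ^ (s - 1) * u ^ (-1 - 2 * s) := by
  have hsub : 0 < 1 - ε := by linarith
  have hle : ε ≤ ε / (1 - ε) := le_div_self hε.le hsub (by linarith)
  have hmono : ∀ u ∈ Ioc ε (ε / (1 - ε)), (1 + ε / (1 - ε)) ^ (s - 1) *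
      (ε / (1 - ε)) ^ (-1 - 2 * s) ≤ (1 + u) ^ (s - 1) * u ^ (-1 - 2 * s) := by
    rintro u ⟨hεu, hu⟩
    have hu0 : 0 < u := hε.trans hεu
    exact mul_le_mul (Real.rpow_le_rpow_of_nonpos (by positivity) (by linarith) (by linarith))
      (Real.rpow_le_rpow_of_nonpos hu0 hu (by linarith)) (by positivity) (by positivity)
  have hint := setIntegral_ge_of_const_le_real measurableSet_Ioc (by simp) hmono
    ((integrableOn_one_add_rpow_sub_one_mul_rpow hs hε).mono_set Ioc_subset_Ioi_self)
  refine le_of_eq_of_le ?_ hint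
  have hadd : 1 + ε / (1 - ε) = (1 - ε)⁻¹ := by
    field_simp
    ring
  have hlength : ε / (1 - ε) - ε = ε ^ (2 : ℝ) * (1 - ε) ^ (-1 : ℝ) := by
    rw [Real.rpow_neg_one, Real.rpow_two]
    field_simp
    ring
  have hpow : ε ^ (1 - 2 * s) = ε ^ (2 : ℝ) * ε ^ (-1 - 2 * s) := by
    rw [← Real.rpow_add hε]
    ring_nf
  have hpow_sub : (1 - ε) ^ (1 + s) =
      (1 - ε) ^ (-1 : ℝ) * (1 - ε) ^ (-(s - 1)) * (1 - ε) ^ (-(-1 - 2 * s)) := by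
    rw [← Real.rpow_add hsub, ← Real.rpow_add hsub]
    ring_nf
  rw [Real.volume_real_Ioc_of_le hle, hadd, hlength, Real.inv_rpow hsub.le,
    ← Real.rpow_neg hsub.le, Real.div_rpow hε.le hsub.le, div_eq_mul_inv, ← Real.rpow_neg hsub.le,
    hpow, hpow_sub]
  ring

theorem neg_rpow_le_integral_Ioi_second_difference (hs : 0 < s) (hs1 : s ≤ 1) (hε : 0 < ε)
    (hε1 : ε < 1) :
    -((1 + s) * ε ^ (2 - 2 * s)) ≤
      ∫ t in Ioi ε, (2 - (1 + t) ^ s - (max (1 - t) 0) ^ s) * t ^ (-1 - 2 * s) := by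
  have hbernoulli_sub : 1 - (1 + s) * ε ≤ (1 - ε) ^ (1 + s) := by
    have := one_add_mul_self_le_rpow_one_add (s := -ε) (by linarith) (p := 1 + s) (by linarith)
    rw [← sub_eq_add_neg] at this
    linarith
  have hbernoulli_add : (1 + ε) ^ s ≤ 1 + s * ε :=
    rpow_one_add_le_one_add_mul_self (by linarith) hs.le hs1
  have hpow_one : ε ^ (1 - 2 * s) = ε ^ (-2 * s) * ε := by
    rw [← Real.rpow_add_one hε.ne']
    ring_nf
  have hpow_two : ε ^ (2 - 2 * s) = ε ^ (1 - 2 * s) * ε := by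
    rw [← Real.rpow_add_one hε.ne']
    ring_nf
  have hIoc := le_integral_Ioc_one_add_rpow_mul_rpow hs hs1 hε hε1
  calc -((1 + s) * ε ^ (2 - 2 * s))
      = s⁻¹ * ε ^ (-2 * s) * (1 - (1 + s * ε)) + ε ^ (1 - 2 * s) * (1 - (1 + s) * ε) := by
        rw [hpow_two, hpow_one]
        field_simp
        ring
    _ ≤ s⁻¹ * ε ^ (-2 * s) * (1 - (1 + ε) ^ s) + ε ^ (1 - 2 * s) * (1 - ε) ^ (1 + s) := by
        gcongr
    _ ≤ _ := by
        rw [integral_Ioi_second_difference_eq hs hε hε1]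
        gcongr

theorem integrableOn_Ioi_second_difference (hs : s ∈ Ioo (0 : ℝ) 1) :
    IntegrableOn (fun t : ℝ => (2 - (1 + t) ^ s - (max (1 - t) 0) ^ s) * t ^ (-1 - 2 * s))
      (Ioi 0) := by
  refine (integrable_symmDiffQuot_halfSpacePow hs one_pos (1 : ℝ)).integrableOn.congr_fun
    (fun t (ht : 0 < t) => ?_) measurableSet_Ioi
  have hadd : halfSpacePow s 1 (1 : ℝ) (0 + t) = (1 + t) ^ s := by
    simp [halfSpacePow, max_eq_left (by linarith : 0 ≤ 1 + t)]
  have hsub : halfSpacePow s 1 (1 : ℝ) (0 - t) = (max (1 - t) 0) ^ s := by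
    simp [halfSpacePow, sub_eq_add_neg]
  have hzero : halfSpacePow s 1 (1 : ℝ) 0 = 1 := by simp [halfSpacePow]
  rw [symmDiffQuot, hadd, hsub, hzero, finrank_self, Real.norm_of_nonneg ht.le, div_eq_mul_inv,
    ← Real.rpow_neg ht.le]
  congr 2 <;> norm_num
  ring

theorem integral_Ioi_second_difference_nonneg (hs : s ∈ Ioo (0 : ℝ) 1) :
    0 ≤ ∫ t in Ioi (0 : ℝ), (2 - (1 + t) ^ s - (max (1 - t) 0) ^ s) * t ^ (-1 - 2 * s) := by
  have hcover : AECover (volume.restrict (Ioi (0 : ℝ))) (𝓝[>] 0) fun ε : ℝ => Ioi ε :=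
    aecover_Ioi_of_Ioi (tendsto_nhdsWithin_of_tendsto_nhds tendsto_id)
  have hint := hcover.integral_tendsto_of_countably_generated
    (integrableOn_Ioi_second_difference hs)
  have hbound : Tendsto (fun ε : ℝ => -((1 + s) * ε ^ (2 - 2 * s))) (𝓝[>] 0) (𝓝 0) := by
    have hpow : 0 < 2 - 2 * s := by linarith [hs.2]
    have := ((Real.continuousAt_rpow_const 0 (2 - 2 * s) (Or.inr hpow.le)).tendsto.const_mul
      (1 + s)).neg
    rw [Real.zero_rpow hpow.ne', mul_zero, neg_zero] at this
    exact tendsto_nhdsWithin_of_tendsto_nhds this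
  refine le_of_tendsto_of_tendsto hbound hint ?_
  filter_upwards [Ioo_mem_nhdsGT one_pos] with ε hε
  rw [Measure.restrict_restrict measurableSet_Ioi, inter_eq_left.2 (Ioi_subset_Ioi hε.1.le)]
  exact neg_rpow_le_integral_Ioi_second_difference hs.1 hs.2.le hε.1 hε.2

theorem integral_Ioi_second_difference_affine_nonneg {q : ℝ} (hs : s ∈ Ioo (0 : ℝ) 1) (hq : 0 < q)
    (b : ℝ) :
    0 ≤ ∫ r in Ioi (0 : ℝ),
      (2 * q ^ s - (max (q + r * b) 0) ^ s - (max (q - r * b) 0) ^ s) * r ^ (-1 - 2 * s) := by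
  wlog hb : 0 ≤ b generalizing b
  · refine (this (-b) (by linarith)).trans_eq ?_
    simp only [mul_neg, sub_neg_eq_add, ← sub_eq_add_neg, sub_right_comm]
  rcases hb.eq_or_lt with rfl | hb
  · simp [max_eq_left hq.le, two_mul]
  set c := b / q with hc
  have hc0 : 0 < c := div_pos hb hq
  have hscale : EqOn
      (fun r : ℝ => (2 * q ^ s - (max (q + r * b) 0) ^ s - (max (q - r * b) 0) ^ s) *
        r ^ (-1 - 2 * s))
      (fun r : ℝ => q ^ s * c ^ (1 + 2 * s) *
        ((2 - (1 + c * r) ^ s - (max (1 - c * r) 0) ^ s) * (c * r) ^ (-1 - 2 * s))) (Ioi 0) := by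
    intro r (hr : 0 < r)
    have hadd : max (q + r * b) 0 = q * (1 + c * r) := by
      rw [max_eq_left (by positivity), hc]
      field_simp
    have hsub : max (q - r * b) 0 = q * max (1 - c * r) 0 := by
      rw [mul_max_of_nonneg _ _ hq.le, mul_zero, hc]
      field_simp
    have hcancel : c ^ (1 + 2 * s) * c ^ (-1 - 2 * s) = 1 := by
      rw [← Real.rpow_add hc0]
      ring_nf
      exact Real.rpow_zero c
    simp only [hadd, hsub]
    rw [Real.mul_rpow hq.le (by positivity), Real.mul_rpow hq.le (le_max_right _ _),
      Real.mul_rpow hc0.le hr.le]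
    linear_combination
      -(q ^ s * (2 - (1 + c * r) ^ s - (max (1 - c * r) 0) ^ s) * r ^ (-1 - 2 * s)) * hcancel
  rw [setIntegral_congr_fun measurableSet_Ioi hscale, integral_const_mul,
    integral_comp_mul_left_Ioi
      (fun t => (2 - (1 + t) ^ s - (max (1 - t) 0) ^ s) * t ^ (-1 - 2 * s)) 0 hc0, mul_zero]
  have hnonneg := integral_Ioi_second_difference_nonneg hs
  positivity

end HalfLine

section PolarCoordinates

variable {E : Type*} [NormedAddCommGroup E] [NormedSpace ℝ E] [FiniteDimensional ℝ E]
  [Nontrivial E] [MeasurableSpace E] [BorelSpace E] {ν : Measure E} [ν.IsAddHaarMeasure]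

theorem integral_volumeIoiPow (k : ℕ) (g : ℝ → ℝ) :
    ∫ r : Ioi (0 : ℝ), g r ∂Measure.volumeIoiPow k = ∫ r in Ioi (0 : ℝ), r ^ k * g r := by
  simp only [Measure.volumeIoiPow, ENNReal.ofReal]
  rw [integral_withDensity_eq_integral_smul (by fun_prop),
    integral_subtype_comap measurableSet_Ioi fun r => Real.toNNReal (r ^ k) • g r]
  refine setIntegral_congr_fun measurableSet_Ioi fun r (hr : 0 < r) => ?_
  rw [NNReal.smul_def, Real.coe_toNNReal _ (by positivity), smul_eq_mul]

theorem integral_eq_integral_toSphere_integral_Ioi {F : E → ℝ} (hF : Integrable F ν) :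
    ∫ z, F z ∂ν = ∫ θ : sphere (0 : E) 1,
      (∫ r in Ioi (0 : ℝ), r ^ (finrank ℝ E - 1) * F (r • (θ : E))) ∂ν.toSphere := by
  have hmp := ν.measurePreserving_homeomorphUnitSphereProd
  have hemb := (homeomorphUnitSphereProd E).measurableEmbedding
  have hmeas : MeasurableSet ({0}ᶜ : Set E) := (measurableSet_singleton _).compl
  let G : sphere (0 : E) 1 × Ioi (0 : ℝ) → ℝ := fun p => F (p.2.1 • p.1.1)
  have hG : ∀ z : ({0}ᶜ : Set E), G (homeomorphUnitSphereProd E z) = F z := fun z => by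
    simp [G, show (z : E) ≠ 0 from z.2]
  have hGint : Integrable G (ν.toSphere.prod (.volumeIoiPow (finrank ℝ E - 1))) := by
    rw [← hmp.integrable_comp_emb hemb, show G ∘ homeomorphUnitSphereProd E = F ∘ Subtype.val from
      funext hG, ← integrableOn_iff_comap_subtypeVal hmeas]
    exact hF.integrableOn
  calc ∫ z, F z ∂ν = ∫ z : ({0}ᶜ : Set E), G (homeomorphUnitSphereProd E z) ∂ν.comap (↑) := by
        simp only [hG]
        rw [integral_subtype_comap hmeas F, restrict_compl_singleton]
    _ = ∫ p, G p ∂ν.toSphere.prod (.volumeIoiPow (finrank ℝ E - 1)) := hmp.integral_comp hemb G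
    _ = _ := by
        rw [integral_prod _ hGint]
        exact integral_congr_ae (.of_forall fun θ => integral_volumeIoiPow _ fun r => F (r • θ.1))

end PolarCoordinates

section HalfSpacePower

variable {E : Type*} [NormedAddCommGroup E] [InnerProductSpace ℝ E]

theorem pow_mul_symmDiffQuot_halfSpacePow_smul [Nontrivial E] [FiniteDimensional ℝ E] {s q r : ℝ}
    (hq : 0 ≤ q) (hr : 0 < r) (a : E) {θ : E} (hθ : ‖θ‖ = 1) :
    r ^ (finrank ℝ E - 1) * symmDiffQuot s (halfSpacePow s q a) 0 (r • θ) =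
      (2 * q ^ s - (max (q + r * ⟪a, θ⟫) 0) ^ s - (max (q - r * ⟪a, θ⟫) 0) ^ s) *
        r ^ (-1 - 2 * s) := by
  have hnorm : ‖r • θ‖ = r := by rw [norm_smul, hθ, mul_one, Real.norm_of_nonneg hr.le]
  have hpow : r ^ (finrank ℝ E - 1) * (r ^ (finrank ℝ E + 2 * s))⁻¹ = r ^ (-1 - 2 * s) := by
    rw [← Real.rpow_natCast, Nat.cast_pred finrank_pos, ← Real.rpow_neg hr.le, ← Real.rpow_add hr]
    ring_nf
  rw [symmDiffQuot, halfSpacePow_zero_right hq, hnorm, zero_add, zero_sub, halfSpacePow,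
    halfSpacePow, inner_neg_right, inner_smul_right, ← sub_eq_add_neg, div_eq_mul_inv,
    mul_left_comm, hpow]

theorem integral_symmDiffQuot_halfSpacePow_nonneg [Nontrivial E] [FiniteDimensional ℝ E]
    [MeasurableSpace E] [BorelSpace E] {ν : Measure E} [ν.IsAddHaarMeasure] {s q : ℝ}
    (hs : s ∈ Ioo (0 : ℝ) 1) (hq : 0 < q) (a : E) :
    0 ≤ ∫ z, symmDiffQuot s (halfSpacePow s q a) 0 z ∂ν := by
  rw [integral_eq_integral_toSphere_integral_Ioi (integrable_symmDiffQuot_halfSpacePow hs hq a)]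
  refine integral_nonneg fun θ => ?_
  refine (integral_Ioi_second_difference_affine_nonneg hs hq ⟪a, (θ : E)⟫).trans_eq ?_
  exact setIntegral_congr_fun measurableSet_Ioi fun r (hr : 0 < r) =>
    (pow_mul_symmDiffQuot_halfSpacePow_smul hq.le hr a (norm_eq_of_mem_sphere θ)).symm

end HalfSpacePower

section CapProfile

theorem hasDerivAt_max_zero_pow (k : ℕ) (x : ℝ) :
    HasDerivAt (fun x : ℝ => (max x 0) ^ (k + 2)) ((k + 2) * (max x 0) ^ (k + 1)) x := by
  have hne : ∀ y ≠ (0 : ℝ),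
      HasDerivAt (fun x : ℝ => (max x 0) ^ (k + 2)) ((k + 2) * (max y 0) ^ (k + 1)) y := by
    intro y hy
    rcases hy.lt_or_gt with hy | hy
    · have hzero : (fun x : ℝ => (max x 0) ^ (k + 2)) =ᶠ[𝓝 y] fun _ => 0 :=
        (gt_mem_nhds hy).mono fun x (hx : x < 0) => by simp [max_eq_right hx.le]
      simpa [max_eq_right hy.le] using (hasDerivAt_const y (0 : ℝ)).congr_of_eventuallyEq hzero
    · have hpow : (fun x : ℝ => (max x 0) ^ (k + 2)) =ᶠ[𝓝 y] fun x => x ^ (k + 2) :=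
        (lt_mem_nhds hy).mono fun x (hx : 0 < x) => by simp [max_eq_left hx.le]
      simpa [max_eq_left hy.le] using (hasDerivAt_pow (k + 2) y).congr_of_eventuallyEq hpow
  exact hasDerivAt_of_hasDerivAt_of_ne' hne (by fun_prop) (by fun_prop) x

theorem contDiff_max_zero_pow_succ (k : ℕ) : ContDiff ℝ k fun x : ℝ => (max x 0) ^ (k + 1) := by
  induction k with
  | zero => exact contDiff_zero.2 (by fun_prop)
  | succ k ih =>
    have hderiv : deriv (fun x : ℝ => (max x 0) ^ (k + 1 + 1)) =
        fun x : ℝ => ((k : ℝ) + 2) * (max x 0) ^ (k + 1) :=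
      funext fun x => (hasDerivAt_max_zero_pow k x).deriv
    rw [Nat.cast_succ, contDiff_succ_iff_deriv, hderiv]
    exact ⟨fun x => (hasDerivAt_max_zero_pow k x).differentiableAt, by simp, contDiff_const.mul ih⟩

/-- The `C²` truncation of `v ↦ 6 v² - 8 v³ + 3 v⁴` at `v = 1`, where it reaches its maximum `1`
with vanishing first and second derivatives. As a function of `v ^ 2 ≥ 0` it is concave. -/
noncomputable def capProfile (v : ℝ) : ℝ :=
  1 - 4 * (max (1 - v) 0) ^ 3 + 3 * (max (1 - v) 0) ^ 4

theorem contDiff_capProfile : ContDiff ℝ 2 capProfile := by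
  have hsub : ContDiff ℝ 2 fun v : ℝ => 1 - v := by fun_prop
  have hcube := (contDiff_max_zero_pow_succ 2).comp hsub
  have hfourth := ((contDiff_max_zero_pow_succ 3).of_le (by norm_num)).comp hsub
  exact (contDiff_const.sub (contDiff_const.mul hcube)).add (contDiff_const.mul hfourth)

variable {v l : ℝ}

theorem capProfile_of_le_one (hv : v ≤ 1) : capProfile v = 6 * v ^ 2 - 8 * v ^ 3 + 3 * v ^ 4 := by
  rw [capProfile, max_eq_left (sub_nonneg.2 hv)]
  ring

theorem capProfile_of_one_le (hv : 1 ≤ v) : capProfile v = 1 := by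
  simp [capProfile, max_eq_right (sub_nonpos.2 hv)]

theorem capProfile_zero : capProfile 0 = 0 := by
  simp [capProfile_of_le_one zero_le_one]

theorem capProfile_le_tangent (hv : 0 ≤ v) (hv1 : v ≤ 1) (hl : 0 ≤ l) :
    capProfile l ≤ capProfile v + 6 * (1 - v) ^ 2 * (l ^ 2 - v ^ 2) := by
  wlog hl1 : l ≤ 1 generalizing l
  · have hone : capProfile l = capProfile 1 := by
      rw [capProfile_of_one_le (le_of_not_ge hl1), capProfile_of_one_le le_rfl]
    rw [hone]
    refine (this zero_le_one le_rfl).trans ?_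
    gcongr
    exact le_of_not_ge hl1
  have hquot : 0 ≤ 8 * l + 4 * v - 3 * (l + v) ^ 2 := by
    nlinarith [mul_nonneg hl (sub_nonneg.2 hl1), mul_nonneg hv (sub_nonneg.2 hv1),
      mul_nonneg hl (sub_nonneg.2 hv1), mul_nonneg hv (sub_nonneg.2 hl1)]
  rw [capProfile_of_le_one hl1, capProfile_of_le_one hv1]
  linear_combination mul_nonneg (sq_nonneg (l - v)) hquot

theorem le_capProfile (hv : 0 ≤ v) (hv1 : v ≤ 1) :
    6 * (1 - v) ^ 2 * v ^ 2 + v ^ 3 ≤ capProfile v := by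
  rw [capProfile_of_le_one hv1]
  linear_combination 3 * mul_nonneg (pow_nonneg hv 3) (sub_nonneg.2 hv1)

theorem capProfile_le_add_sq_sub_sq (hv : 0 ≤ v) (hvl : v ≤ l) :
    capProfile l ≤ capProfile v + 6 * (l ^ 2 - v ^ 2) := by
  have hsq : 0 ≤ l ^ 2 - v ^ 2 := sub_nonneg.2 (by gcongr)
  rcases le_total v 1 with hv1 | hv1
  · refine (capProfile_le_tangent hv hv1 (hv.trans hvl)).trans ?_
    have : (1 - v) ^ 2 ≤ 1 := pow_le_one₀ (by linarith) (by linarith)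
    nlinarith
  · rw [capProfile_of_one_le hv1, capProfile_of_one_le (hv1.trans hvl)]
    linarith

theorem capProfile_nonneg (hv : 0 ≤ v) : 0 ≤ capProfile v := by
  rcases le_total v 1 with hv1 | hv1
  · exact le_trans (by positivity) (le_capProfile hv hv1)
  · simp [capProfile_of_one_le hv1]

theorem capProfile_le_one (hv : 0 ≤ v) : capProfile v ≤ 1 := by
  simpa [capProfile_of_one_le] using capProfile_le_tangent zero_le_one le_rfl hv

theorem capProfile_le_sq (hv : 0 ≤ v) : capProfile v ≤ 6 * v ^ 2 := by
  simpa [capProfile_zero] using capProfile_le_add_sq_sub_sq le_rfl hv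

end CapProfile

section PowerPerturbation

theorem rpow_max_add_sub_rpow_max_le {s a δ : ℝ} (hs : 0 ≤ s) (hs1 : s ≤ 1) (hδ : 0 ≤ δ) :
    (max (a + δ) 0) ^ s - (max a 0) ^ s ≤ δ ^ s := by
  have hmax : max (a + δ) 0 ≤ max a 0 + δ :=
    max_le (by linarith [le_max_left a 0]) (by positivity)
  rw [sub_le_iff_le_add']
  exact (Real.rpow_le_rpow (le_max_right _ _) hmax hs).trans
    (Real.rpow_add_le_add_rpow (le_max_right _ _) hδ hs hs1)

theorem rpow_add_sub_rpow_le {s a δ : ℝ} (hs : 0 ≤ s) (hs1 : s ≤ 1) (ha : 0 < a) (hδ : 0 ≤ δ) :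
    (a + δ) ^ s - a ^ s ≤ a ^ (s - 1) * δ := by
  have hratio : 0 ≤ δ / a := by positivity
  calc (a + δ) ^ s - a ^ s = a ^ s * (1 + δ / a) ^ s - a ^ s := by
        rw [← Real.mul_rpow ha.le (by positivity), mul_add, mul_one, mul_div_cancel₀ δ ha.ne']
    _ ≤ a ^ s * (1 + s * (δ / a)) - a ^ s := by
        gcongr
        exact rpow_one_add_le_one_add_mul_self (by linarith) hs hs1
    _ = s * (a ^ (s - 1) * δ) := by
        rw [Real.rpow_sub_one ha.ne']
        ring
    _ ≤ a ^ (s - 1) * δ := mul_le_of_le_one_left (by positivity) hs1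

variable {s η q ρ c L : ℝ}

theorem one_le_mul_rpow_div_rpow (hη : 0 ≤ η) (hη1 : η ≤ 1) (hq : 0 < q) (hL : 1 ≤ L)
    (hρ : q ≤ L * ρ) : 1 ≤ L * (ρ ^ η / q ^ η) := by
  have hρ0 : 0 ≤ ρ := by nlinarith
  calc 1 ≤ (L * ρ / q) ^ η := Real.one_le_rpow ((one_le_div hq).2 hρ) hη
    _ = L ^ η * (ρ ^ η / q ^ η) := by
        rw [mul_div_assoc, Real.mul_rpow (by positivity) (by positivity), Real.div_rpow hρ0 hq.le]
    _ ≤ L * (ρ ^ η / q ^ η) := by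
        gcongr
        exact Real.rpow_le_self_of_one_le hL hη1

theorem rpow_sub_one_mul_sq_le (hηs : η ≤ 1 - s) (hs1 : s ≤ 1) (hq : 0 < q) (hq1 : q ≤ 1)
    (hρ : 0 < ρ) (hρq : ρ ≤ q) : q ^ (s - 1) * ρ ^ 2 ≤ ρ ^ (2 * s + η) / q ^ η := by
  calc q ^ (s - 1) * ρ ^ 2 = ρ ^ (2 * s + η) * (q ^ (s - 1) * ρ ^ (2 - 2 * s - η)) := by
        rw [← Real.rpow_two, mul_left_comm, ← Real.rpow_add hρ]
        ring_nf
    _ ≤ ρ ^ (2 * s + η) * (q ^ (s - 1) * q ^ (2 - 2 * s - η)) := by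
        gcongr
        linarith
    _ ≤ ρ ^ (2 * s + η) * q ^ (-η) := by
        rw [← Real.rpow_add hq]
        gcongr ?_ * ?_
        exact Real.rpow_le_rpow_of_exponent_ge hq hq1 (by linarith)
    _ = ρ ^ (2 * s + η) / q ^ η := by rw [Real.rpow_neg hq.le, div_eq_mul_inv]

theorem rpow_max_add_sq_sub_rpow_max_le (hs : 0 ≤ s) (hs1 : s ≤ 1) (hη : 0 ≤ η) (hηs : η ≤ 1 - s)
    (hq : 0 < q) (hq1 : q ≤ 1) (hL : 1 ≤ L) (hρ : 0 < ρ) (hc : |c| ≤ L * ρ) :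
    (max (q + c + ρ ^ 2 / 2) 0) ^ s - (max (q + c) 0) ^ s ≤
      2 * L * (ρ ^ (2 * s + η) / q ^ η) := by
  rcases le_or_gt q (2 * L * ρ) with hqρ | hρq
  · calc (max (q + c + ρ ^ 2 / 2) 0) ^ s - (max (q + c) 0) ^ s ≤ (ρ ^ 2 / 2) ^ s :=
          rpow_max_add_sub_rpow_max_le hs hs1 (by positivity)
      _ ≤ ρ ^ (2 * s) := by
          rw [Real.rpow_mul hρ.le, Real.rpow_two]
          gcongr
          exact half_le_self (sq_nonneg ρ)
      _ ≤ ρ ^ (2 * s) * (2 * L * (ρ ^ η / q ^ η)) :=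
          le_mul_of_one_le_right (by positivity)
            (one_le_mul_rpow_div_rpow hη (by linarith) hq (by linarith) hqρ)
      _ = 2 * L * (ρ ^ (2 * s + η) / q ^ η) := by
          rw [Real.rpow_add hρ]
          ring
  · have hhalf : q / 2 ≤ q + c := by linarith [(abs_le.1 hc).1]
    have hpos : 0 < q + c := by linarith
    have hρq' : ρ ≤ q := by nlinarith
    rw [max_eq_left (by positivity), max_eq_left hpos.le]
    calc (q + c + ρ ^ 2 / 2) ^ s - (q + c) ^ s ≤ (q + c) ^ (s - 1) * (ρ ^ 2 / 2) :=
          rpow_add_sub_rpow_le hs hs1 hpos (by positivity)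
      _ ≤ (q / 2) ^ (s - 1) * (ρ ^ 2 / 2) := by
          gcongr ?_ * _
          exact Real.rpow_le_rpow_of_nonpos (by positivity) hhalf (by linarith)
      _ = 2 ^ (-s) * (q ^ (s - 1) * ρ ^ 2) := by
          rw [Real.div_rpow hq.le zero_le_two, Real.rpow_sub_one two_ne_zero,
            Real.rpow_neg zero_le_two]
          field_simp
      _ ≤ 1 * (ρ ^ (2 * s + η) / q ^ η) :=
          mul_le_mul (Real.rpow_le_one_of_one_le_of_nonpos one_le_two (by linarith))
            (rpow_sub_one_mul_sq_le hηs hs1 hq hq1 hρ hρq') (by positivity) zero_le_one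
      _ ≤ 2 * L * (ρ ^ (2 * s + η) / q ^ η) := by
          gcongr
          linarith

end PowerPerturbation

section CapProfileRpow

variable {s η μ q c ρ L : ℝ}

theorem sq_mul_rpow_half (s μ : ℝ) (hq : 0 ≤ q) : (μ * q ^ (s / 2)) ^ 2 = μ ^ 2 * q ^ s := by
  rw [mul_pow, ← Real.rpow_mul_natCast hq, Nat.cast_two, div_mul_cancel₀ s two_ne_zero]

theorem capProfile_mul_rpow_max_le_add (hs : 0 ≤ s) (hs1 : s ≤ 1) (hη : 0 ≤ η) (hηs : η ≤ 1 - s)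
    (hμ : 1 ≤ μ) (hq : 0 < q) (hq1 : q ≤ 1) (hL : 1 ≤ L) (hρ : 0 < ρ) (hc : |c| ≤ L * ρ) :
    capProfile (μ * (max (q + c + ρ ^ 2 / 2) 0) ^ (s / 2)) ≤
      capProfile (μ * (max (q + c) 0) ^ (s / 2)) +
        12 * L * μ ^ 2 / q ^ η * min (ρ ^ (2 * s + η)) 1 := by
  have hv : 0 ≤ μ * (max (q + c) 0) ^ (s / 2) := by positivity
  rcases le_total (ρ ^ (2 * s + η)) 1 with hρ1 | hρ1
  · have hle : μ * (max (q + c) 0) ^ (s / 2) ≤ μ * (max (q + c + ρ ^ 2 / 2) 0) ^ (s / 2) := by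
      gcongr ?_ * (max ?_ 0) ^ _
      exact le_add_of_nonneg_right (by positivity)
    refine (capProfile_le_add_sq_sub_sq hv hle).trans ?_
    rw [sq_mul_rpow_half s μ (le_max_right _ _), sq_mul_rpow_half s μ (le_max_right _ _),
      min_eq_left hρ1]
    have hpert := rpow_max_add_sq_sub_rpow_max_le hs hs1 hη hηs hq hq1 hL hρ hc
    linear_combination 6 * μ ^ 2 * hpert
  · have hone : 1 ≤ 12 * L * μ ^ 2 / q ^ η := by
      rw [one_le_div (by positivity)]
      have := Real.rpow_le_one hq.le hq1 hη
      nlinarith [one_le_pow₀ hμ (n := 2)]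
    rw [min_eq_right hρ1, mul_one]
    exact (capProfile_le_one (by positivity)).trans (by linarith [capProfile_nonneg hv])

theorem capProfile_mul_rpow_max_le_tangent (hs : 0 < s) (hμ : 0 ≤ μ) (hq : 0 ≤ q)
    (hv : μ * q ^ (s / 2) ≤ 1) (a : ℝ) :
    capProfile (μ * (max a 0) ^ (s / 2)) ≤ capProfile (μ * q ^ (s / 2)) +
      6 * (1 - μ * q ^ (s / 2)) ^ 2 * μ ^ 2 * ((max a 0) ^ s - q ^ s) -
        (Iic 0).indicator (fun _ => (μ * q ^ (s / 2)) ^ 3) a := by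
  have hv0 : 0 ≤ μ * q ^ (s / 2) := by positivity
  have hsq := sq_mul_rpow_half s μ hq
  rcases le_or_gt a 0 with ha | ha
  · rw [max_eq_right ha, Real.zero_rpow (half_pos hs).ne', Real.zero_rpow hs.ne', mul_zero,
      capProfile_zero, indicator_of_mem (mem_Iic.2 ha)]
    linear_combination le_capProfile hv0 hv - 6 * (1 - μ * q ^ (s / 2)) ^ 2 * hsq
  · rw [indicator_of_notMem (notMem_Iic.2 ha), sub_zero]
    refine (capProfile_le_tangent hv0 hv (by positivity)).trans_eq ?_
    rw [hsq, sq_mul_rpow_half s μ (le_max_right _ _)]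
    ring

end CapProfileRpow

theorem exists_closedBall_subset_halfSpace {E : Type*} [NormedAddCommGroup E]
    [InnerProductSpace ℝ E] {q : ℝ} (hq : 0 ≤ q) {a : E} (ha : a ≠ 0) :
    ∃ w : E, ‖w‖ = 2 * (q / ‖a‖) ∧ closedBall w (q / ‖a‖) ⊆ {z | q + ⟪a, z⟫ ≤ 0} := by
  have ha0 : 0 < ‖a‖ := norm_pos_iff.2 ha
  refine ⟨-((2 * q / ‖a‖ ^ 2) • a), ?_, fun z hz => ?_⟩
  · rw [norm_neg, norm_smul, Real.norm_of_nonneg (by positivity)]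
    field_simp
  · set w : E := -((2 * q / ‖a‖ ^ 2) • a) with hw
    have hinner : ⟪a, w⟫ = -(2 * q) := by
      rw [hw, inner_neg_right, inner_smul_right, real_inner_self_eq_norm_sq]
      field_simp
    have hdiff : ⟪a, z - w⟫ ≤ q := calc
      ⟪a, z - w⟫ ≤ ‖a‖ * ‖z - w‖ := real_inner_le_norm a _
      _ ≤ ‖a‖ * (q / ‖a‖) := by gcongr; exact mem_closedBall_iff_norm.1 hz
      _ = q := mul_div_cancel₀ q ha0.ne'
    rw [inner_sub_right, hinner] at hdiff
    exact mem_ofPred.2 (by linarith)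

section KernelIntegrals

variable {E : Type*} [NormedAddCommGroup E] [MeasurableSpace E] [BorelSpace E] {ν : Measure E}
  [ν.IsAddHaarMeasure]

theorem integrable_min_norm_rpow_div_norm_rpow [NormedSpace ℝ E] [FiniteDimensional ℝ E]
    [Nontrivial E] {β γ : ℝ} (hβ : finrank ℝ E < β) (hβγ : β < finrank ℝ E + γ) :
    Integrable (fun z : E => min (‖z‖ ^ γ) 1 / ‖z‖ ^ β) ν := by
  have hnonneg : ∀ z : E, 0 ≤ min (‖z‖ ^ γ) 1 := fun z => by positivity
  refine integrable_div_norm_rpow_of_isBigO (A := 1) (α := 0) (γ := γ)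
    ((finrank ℝ E).cast_nonneg.trans_lt hβ) (by simpa) hβγ
    (by fun_prop : Measurable fun z : E => min (‖z‖ ^ γ) 1).aestronglyMeasurable
    (fun z => by simp [abs_of_nonneg (hnonneg z)]) (IsBigO.of_bound 1 (.of_forall fun z => ?_))
  rw [one_mul, Real.norm_of_nonneg (hnonneg z), Real.norm_of_nonneg (by positivity)]
  exact min_le_left _ _

variable [InnerProductSpace ℝ E] [FiniteDimensional ℝ E] {s q : ℝ}

theorem integrableOn_inv_norm_rpow_halfSpace (hs : 0 < s) (hq : 0 < q) {a : E} (ha : a ≠ 0) :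
    IntegrableOn (fun z : E => 1 / ‖z‖ ^ (finrank ℝ E + 2 * s)) {z | q + ⟪a, z⟫ ≤ 0} ν := by
  refine (integrableOn_div_norm_rpow_of_norm_le (ε := q / (2 * ‖a‖)) (A := 1) (α := 0)
    (by positivity) (by positivity) (by linarith) aestronglyMeasurable_const
    (by simp)).mono_set fun z (hz : q + ⟪a, z⟫ ≤ 0) => ?_
  rw [mem_ofPred_eq, div_lt_iff₀ (by positivity)]
  have := neg_le_of_abs_le (abs_real_inner_le_norm a z)
  nlinarith

theorem rpow_le_setIntegral_inv_norm_rpow_halfSpace (hs : 0 < s) (hq : 0 < q) {a : E}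
    (ha : a ≠ 0) :
    ν.real (ball 0 1) * 3 ^ (-(finrank ℝ E + 2 * s)) * (q / ‖a‖) ^ (-(2 * s)) ≤
      ∫ z in {z : E | q + ⟪a, z⟫ ≤ 0}, 1 / ‖z‖ ^ (finrank ℝ E + 2 * s) ∂ν := by
  obtain ⟨w, hw, hsub⟩ := exists_closedBall_subset_halfSpace hq.le ha
  set r := q / ‖a‖
  have hr : 0 < r := by positivity
  have hint := integrableOn_inv_norm_rpow_halfSpace (ν := ν) hs hq ha
  have hbound : ∀ z ∈ closedBall w r, (3 * r) ^ (-(finrank ℝ E + 2 * s)) ≤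
      1 / ‖z‖ ^ (finrank ℝ E + 2 * s) := by
    intro z hz
    have hzw : ‖z - w‖ ≤ r := mem_closedBall_iff_norm.1 hz
    have hz0 : 0 < ‖z‖ := by linarith [norm_sub_norm_le w z, norm_sub_rev w z]
    rw [one_div, ← Real.rpow_neg hz0.le]
    exact Real.rpow_le_rpow_of_nonpos hz0 (by linarith [norm_sub_norm_le z w])
      (neg_nonpos.2 (by positivity))
  calc ν.real (ball 0 1) * 3 ^ (-(finrank ℝ E + 2 * s)) * r ^ (-(2 * s))
      = (3 * r) ^ (-(finrank ℝ E + 2 * s)) * ν.real (closedBall w r) := by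
        have hpow : r ^ (-(2 * s)) = r ^ (-(finrank ℝ E + 2 * s)) * r ^ finrank ℝ E := by
          rw [← Real.rpow_natCast, ← Real.rpow_add hr]
          ring_nf
        rw [Measure.addHaar_real_closedBall ν w hr.le, Real.mul_rpow zero_le_three hr.le, hpow]
        ring
    _ ≤ ∫ z in closedBall w r, 1 / ‖z‖ ^ (finrank ℝ E + 2 * s) ∂ν :=
        setIntegral_ge_of_const_le_real measurableSet_closedBall measure_closedBall_lt_top.ne
          hbound (hint.mono_set hsub)
    _ ≤ _ := setIntegral_mono_set hint (.of_forall fun z => by positivity) hsub.eventuallyLE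

end KernelIntegrals

theorem one_le_mul_rpow_sub_of_add_one_le_mul {s η μ q b C κ R : ℝ} (hs : 0 ≤ s) (hη : 0 ≤ η)
    (hηs : η ≤ s / 2) (hμ : 1 ≤ μ) (hq : 0 < q) (hq1 : q ≤ 1) (hb : 1 ≤ b) (hκ : 0 ≤ κ)
    (hμκ : C * R + 1 ≤ μ * κ) :
    1 ≤ (μ * q ^ (s / 2)) ^ 3 * (κ * (q / b) ^ (-(2 * s))) - C * μ ^ 2 / q ^ η * R := by
  have hqη : 1 ≤ 1 / q ^ η := one_le_one_div (by positivity) (Real.rpow_le_one hq.le hq1 hη)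
  have hpow : μ ^ 3 * (1 / q ^ η) ≤ (μ * q ^ (s / 2)) ^ 3 * (q / b) ^ (-(2 * s)) := calc
    μ ^ 3 * (1 / q ^ η) ≤ μ ^ 3 * q ^ (-(s / 2)) := by
        rw [one_div, ← Real.rpow_neg hq.le]
        gcongr ?_ * ?_
        exact Real.rpow_le_rpow_of_exponent_ge hq hq1 (by linarith)
    _ = (μ * q ^ (s / 2)) ^ 3 * q ^ (-(2 * s)) := by
        rw [mul_pow, ← Real.rpow_mul_natCast hq.le, mul_assoc, ← Real.rpow_add hq]
        ring_nf
    _ ≤ (μ * q ^ (s / 2)) ^ 3 * (q / b) ^ (-(2 * s)) := by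
        gcongr ?_ * ?_
        exact Real.rpow_le_rpow_of_nonpos (by positivity) (div_le_self hq.le hb) (by linarith)
  calc 1 ≤ μ ^ 2 * (1 / q ^ η) * 1 := by
        rw [mul_one]
        exact one_le_mul_of_one_le_of_one_le (one_le_pow₀ hμ) hqη
    _ ≤ μ ^ 2 * (1 / q ^ η) * (μ * κ - C * R) := by
        gcongr
        linarith
    _ = μ ^ 3 * (1 / q ^ η) * κ - C * μ ^ 2 / q ^ η * R := by ring
    _ ≤ (μ * q ^ (s / 2)) ^ 3 * (q / b) ^ (-(2 * s)) * κ - C * μ ^ 2 / q ^ η * R := by gcongr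
    _ = _ := by ring

section Barrier

variable {E : Type*} [NormedAddCommGroup E]

/-- The radial barrier `Φ (μ w₊ ^ (s / 2))`, where `Φ` is `capProfile` and `w = (‖y‖² - 1) / 2`
vanishes on the unit sphere. It behaves like `6 μ² (‖y‖ - 1) ^ s` near that sphere and equals `1`
away from it. -/
noncomputable def barrier (s μ : ℝ) (y : E) : ℝ :=
  capProfile (μ * (max ((‖y‖ ^ 2 - 1) / 2) 0) ^ (s / 2))

variable {s μ q : ℝ} {x : E}

theorem barrier_nonneg (hμ : 0 ≤ μ) (y : E) : 0 ≤ barrier s μ y :=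
  capProfile_nonneg (by positivity)

theorem barrier_le_one (hμ : 0 ≤ μ) (y : E) : barrier s μ y ≤ 1 :=
  capProfile_le_one (by positivity)

theorem abs_barrier_le (hμ : 0 ≤ μ) (y : E) : |barrier s μ y| ≤ 1 * (1 + ‖y‖) ^ (0 : ℝ) := by
  rw [Real.rpow_zero, mul_one, abs_of_nonneg (barrier_nonneg hμ y)]
  exact barrier_le_one hμ y

theorem barrier_eq_of_norm_sq_eq (hqx : ‖x‖ ^ 2 = 1 + 2 * q) (hq : 0 ≤ q) :
    barrier s μ x = capProfile (μ * q ^ (s / 2)) := by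
  rw [barrier, hqx, add_sub_cancel_left, mul_div_cancel_left₀ q two_ne_zero, max_eq_left hq]

theorem barrier_of_norm_le_one (hs : 0 < s) (hx : ‖x‖ ≤ 1) : barrier s μ x = 0 := by
  have hw : (‖x‖ ^ 2 - 1) / 2 ≤ 0 := by nlinarith [norm_nonneg x]
  rw [barrier, max_eq_right hw, Real.zero_rpow (half_pos hs).ne', mul_zero, capProfile_zero]

theorem barrier_of_two_le_norm (hs : 0 ≤ s) (hμ : 1 ≤ μ) (hx : 2 ≤ ‖x‖) : barrier s μ x = 1 := by
  have hw : 1 ≤ max ((‖x‖ ^ 2 - 1) / 2) 0 := le_max_of_le_left (by nlinarith)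
  exact capProfile_of_one_le (one_le_mul_of_one_le_of_one_le hμ
    (Real.one_le_rpow hw (by positivity)))

theorem barrier_le_mul_rpow {L : ℝ} (hs : 0 ≤ s) (hs1 : s ≤ 1) (hμ : 0 ≤ μ) (hx : 1 ≤ ‖x‖)
    (hxL : ‖x‖ ≤ L) : barrier s μ x ≤ 6 * L * μ ^ 2 * (‖x‖ - 1) ^ s := by
  have hx0 : 0 ≤ ‖x‖ - 1 := sub_nonneg.2 hx
  have hL : 1 ≤ L := hx.trans hxL
  have hw : max ((‖x‖ ^ 2 - 1) / 2) 0 ≤ L * (‖x‖ - 1) :=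
    max_le (by nlinarith) (by positivity)
  calc barrier s μ x ≤ 6 * (μ * (max ((‖x‖ ^ 2 - 1) / 2) 0) ^ (s / 2)) ^ 2 :=
        capProfile_le_sq (by positivity)
    _ = 6 * (μ ^ 2 * (max ((‖x‖ ^ 2 - 1) / 2) 0) ^ s) := by
        rw [sq_mul_rpow_half s μ (le_max_right _ _)]
    _ ≤ 6 * (μ ^ 2 * (L * (‖x‖ - 1)) ^ s) := by gcongr
    _ ≤ 6 * (μ ^ 2 * (L * (‖x‖ - 1) ^ s)) := by
        rw [Real.mul_rpow (by positivity) hx0]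
        gcongr
        exact Real.rpow_le_self_of_one_le hL hs1
    _ = 6 * L * μ ^ 2 * (‖x‖ - 1) ^ s := by ring

theorem continuous_barrier (hs : 0 ≤ s) : Continuous (barrier s μ : E → ℝ) :=
  contDiff_capProfile.continuous.comp <| continuous_const.mul <|
    Continuous.rpow_const (by fun_prop) fun _ => Or.inr (by positivity)

variable [InnerProductSpace ℝ E]

theorem contDiffAt_barrier (hx : 1 < ‖x‖) : ContDiffAt ℝ 2 (barrier s μ) x := by
  have hpos : ∀ᶠ y in 𝓝 x, 0 < (‖y‖ ^ 2 - 1) / 2 :=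
    (by fun_prop : ContinuousAt (fun y : E => (‖y‖ ^ 2 - 1) / 2) x).eventually
      (lt_mem_nhds (by nlinarith))
  have hw : ContDiffAt ℝ 2 (fun y : E => (‖y‖ ^ 2 - 1) / 2) x :=
    ((contDiff_norm_sq ℝ).contDiffAt.sub contDiffAt_const).div_const 2
  have hv : ContDiffAt ℝ 2 (fun y : E => μ * ((‖y‖ ^ 2 - 1) / 2) ^ (s / 2)) x :=
    contDiffAt_const.mul (hw.rpow_const_of_ne hpos.self_of_nhds.ne')
  refine (contDiff_capProfile.contDiffAt.comp x hv).congr_of_eventuallyEq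
    (hpos.mono fun y hy => ?_)
  simp only [Function.comp_apply, barrier, max_eq_left hy.le]

variable {η L : ℝ}

/- Around `x`, the quantity `w` is the affine function `q + ⟪x, z⟫` plus `‖z‖² / 2`: concavity of
the cap handles the affine part, and the quadratic part costs the last term. -/
theorem barrier_add_le (hs : s ∈ Ioo (0 : ℝ) 1) (hη : 0 ≤ η) (hηs : η ≤ 1 - s) (hμ : 1 ≤ μ)
    (hqx : ‖x‖ ^ 2 = 1 + 2 * q) (hq : 0 < q) (hq1 : q ≤ 1) (hv : μ * q ^ (s / 2) ≤ 1)
    (hxL : ‖x‖ ≤ L) {z : E} (hz : z ≠ 0) :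
    barrier s μ (x + z) ≤ barrier s μ x +
      6 * (1 - μ * q ^ (s / 2)) ^ 2 * μ ^ 2 * (halfSpacePow s q x z - q ^ s) -
      {z | q + ⟪x, z⟫ ≤ 0}.indicator (fun _ => (μ * q ^ (s / 2)) ^ 3) z +
      12 * L * μ ^ 2 / q ^ η * min (‖z‖ ^ (2 * s + η)) 1 := by
  have hL : 1 ≤ L := by nlinarith [norm_nonneg x]
  have hw : (‖x + z‖ ^ 2 - 1) / 2 = q + ⟪x, z⟫ + ‖z‖ ^ 2 / 2 := by
    rw [norm_add_sq_real, hqx]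
    ring
  have hinner : |⟪x, z⟫| ≤ L * ‖z‖ := (abs_real_inner_le_norm x z).trans (by gcongr)
  have hquad := capProfile_mul_rpow_max_le_add hs.1.le hs.2.le hη hηs hμ hq hq1 hL
    (norm_pos_iff.2 hz) hinner
  have haffine := capProfile_mul_rpow_max_le_tangent hs.1 (by linarith) hq.le hv (q + ⟪x, z⟫)
  rw [barrier_eq_of_norm_sq_eq hqx hq.le, barrier, hw]
  exact hquad.trans (by gcongr; exact haffine)

theorem le_symmDiffQuot_barrier (hs : s ∈ Ioo (0 : ℝ) 1) (hη : 0 ≤ η) (hηs : η ≤ 1 - s)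
    (hμ : 1 ≤ μ) (hqx : ‖x‖ ^ 2 = 1 + 2 * q) (hq : 0 < q) (hq1 : q ≤ 1)
    (hv : μ * q ^ (s / 2) ≤ 1) (hxL : ‖x‖ ≤ L) (z : E) :
    6 * (1 - μ * q ^ (s / 2)) ^ 2 * μ ^ 2 * symmDiffQuot s (halfSpacePow s q x) 0 z +
      (μ * q ^ (s / 2)) ^ 3 *
        {z : E | q + ⟪x, z⟫ ≤ 0}.indicator (fun z => 1 / ‖z‖ ^ (finrank ℝ E + 2 * s)) z -
      24 * L * μ ^ 2 / q ^ η *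
        (min (‖z‖ ^ (2 * s + η)) 1 / ‖z‖ ^ (finrank ℝ E + 2 * s)) ≤
      symmDiffQuot s (barrier s μ) x z := by
  rcases eq_or_ne z 0 with rfl | hz
  · have hexp : (finrank ℝ E + 2 * s : ℝ) ≠ 0 := by
      have := hs.1
      positivity
    simp [symmDiffQuot, hq.not_ge, Real.zero_rpow hexp]
  have hadd := barrier_add_le hs hη hηs hμ hqx hq hq1 hv hxL hz
  have hsub := barrier_add_le hs hη hηs hμ hqx hq hq1 hv hxL (neg_ne_zero.2 hz)
  have hind : 0 ≤ {z | q + ⟪x, z⟫ ≤ 0}.indicator (fun _ => (μ * q ^ (s / 2)) ^ 3) (-z) :=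
    indicator_nonneg (fun _ _ => by positivity) _
  have hind_mul : {z : E | q + ⟪x, z⟫ ≤ 0}.indicator
      (fun z => 1 / ‖z‖ ^ (finrank ℝ E + 2 * s)) z * (μ * q ^ (s / 2)) ^ 3 =
      {z : E | q + ⟪x, z⟫ ≤ 0}.indicator (fun _ => (μ * q ^ (s / 2)) ^ 3) z /
        ‖z‖ ^ (finrank ℝ E + 2 * s) := by
    by_cases hz : z ∈ {z : E | q + ⟪x, z⟫ ≤ 0} <;> simp [hz, div_eq_inv_mul]
  rw [norm_neg] at hsub
  rw [mul_comm (_ ^ 3), hind_mul, symmDiffQuot, symmDiffQuot, halfSpacePow_zero_right hq.le,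
    zero_add, zero_sub, ← mul_div_assoc, ← mul_div_assoc, ← add_div, ← sub_div, sub_eq_add_neg x z]
  gcongr ?_ / _
  linear_combination hadd + hsub + hind

variable [FiniteDimensional ℝ E] [Nontrivial E] [MeasurableSpace E] [BorelSpace E]

theorem integrable_symmDiffQuot_barrier {ν : Measure E} [ν.IsAddHaarMeasure]
    (hs : s ∈ Ioo (0 : ℝ) 1) (hμ : 0 ≤ μ) (hx : 1 < ‖x‖) :
    Integrable (symmDiffQuot s (barrier s μ) x) ν :=
  integrable_symmDiffQuot hs.2 le_rfl (by linarith [hs.1]) (continuous_barrier hs.1.le).measurable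
    (abs_barrier_le hμ) (contDiffAt_barrier hx)

variable (ν : Measure E) [ν.IsAddHaarMeasure]

theorem le_integral_symmDiffQuot_barrier_of_le_one (hs : s ∈ Ioo (0 : ℝ) 1) (hη : 0 < η)
    (hηs : η ≤ 1 - s) (hμ : 1 ≤ μ) (hqx : ‖x‖ ^ 2 = 1 + 2 * q) (hq : 0 < q) (hq1 : q ≤ 1)
    (hv : μ * q ^ (s / 2) ≤ 1) (hxL : ‖x‖ ≤ L) :
    (μ * q ^ (s / 2)) ^ 3 *
        (ν.real (ball 0 1) * 3 ^ (-(finrank ℝ E + 2 * s)) * (q / ‖x‖) ^ (-(2 * s))) -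
      24 * L * μ ^ 2 / q ^ η *
        ∫ z : E, min (‖z‖ ^ (2 * s + η)) 1 / ‖z‖ ^ (finrank ℝ E + 2 * s) ∂ν ≤
      ∫ z, symmDiffQuot s (barrier s μ) x z ∂ν := by
  obtain ⟨hs0, hs1⟩ := hs
  have hx : 1 < ‖x‖ := by nlinarith [norm_nonneg x]
  have hx0 : x ≠ 0 := norm_pos_iff.1 (zero_lt_one.trans hx)
  have hmeas : MeasurableSet {z : E | q + ⟪x, z⟫ ≤ 0} :=
    measurableSet_le (by fun_prop) measurable_const
  have hhalf := (integrable_symmDiffQuot_halfSpacePow (ν := ν) ⟨hs0, hs1⟩ hq x).const_mul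
    (6 * (1 - μ * q ^ (s / 2)) ^ 2 * μ ^ 2)
  have hind := ((integrable_indicator_iff hmeas).2
    (integrableOn_inv_norm_rpow_halfSpace (ν := ν) hs0 hq hx0)).const_mul ((μ * q ^ (s / 2)) ^ 3)
  have hloss := (integrable_min_norm_rpow_div_norm_rpow (E := E) (ν := ν) (γ := 2 * s + η)
    (by linarith : finrank ℝ E < finrank ℝ E + 2 * s) (by linarith)).const_mul
    (24 * L * μ ^ 2 / q ^ η)
  have hmono := integral_mono ((hhalf.add hind).sub hloss)
    (integrable_symmDiffQuot_barrier ⟨hs0, hs1⟩ (by linarith) hx)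
    (le_symmDiffQuot_barrier ⟨hs0, hs1⟩ hη.le hηs hμ hqx hq hq1 hv hxL)
  rw [integral_sub' (hhalf.add hind) hloss, integral_add' hhalf hind, integral_const_mul,
    integral_const_mul, integral_const_mul, integral_indicator hmeas] at hmono
  have hhalf_nonneg := integral_symmDiffQuot_halfSpacePow_nonneg (ν := ν) ⟨hs0, hs1⟩ hq x
  have hball := rpow_le_setIntegral_inv_norm_rpow_halfSpace (ν := ν) hs0 hq hx0
  refine le_trans ?_ hmono
  gcongr
  refine (le_add_of_nonneg_left (by positivity)).trans' ?_
  gcongr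

theorem le_integral_symmDiffQuot_barrier_of_eq_one (hs : s ∈ Ioo (0 : ℝ) 1) (hμ : 0 ≤ μ)
    (hx : 1 < ‖x‖) (hx1 : barrier s μ x = 1) :
    (1 + ‖x‖) ^ (-(finrank ℝ E + 2 * s)) * ν.real (ball (0 : E) 1) ≤
      ∫ z, symmDiffQuot s (barrier s μ) x z ∂ν := by
  have hint := integrable_symmDiffQuot_barrier (ν := ν) hs hμ hx
  have hs0 := hs.1
  have hnonneg : ∀ z, 0 ≤ symmDiffQuot s (barrier s μ) x z := fun z => by
    refine div_nonneg ?_ (by positivity)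
    linarith [barrier_le_one (s := s) hμ (x + z), barrier_le_one (s := s) hμ (x - z)]
  have hbound : ∀ z ∈ ball (-x) 1, (1 + ‖x‖) ^ (-(finrank ℝ E + 2 * s)) ≤
      symmDiffQuot s (barrier s μ) x z := by
    intro z hz
    have hzx : ‖x + z‖ < 1 := by simpa [dist_eq_norm, add_comm] using hz
    have hz0 : 0 < ‖z‖ := by linarith [norm_sub_le_norm_add x z]
    have hz_le : ‖z‖ ≤ 1 + ‖x‖ := by
      rw [add_comm x z] at hzx
      linarith [norm_sub_le_norm_add z x]
    rw [symmDiffQuot, hx1, barrier_of_norm_le_one hs0 hzx.le, Real.rpow_neg (by positivity),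
      ← one_div]
    have hnum : 1 ≤ 2 * 1 - 0 - barrier s μ (x - z) := by
      linarith [barrier_le_one (s := s) hμ (x - z)]
    exact div_le_div₀ (zero_le_one.trans hnum) hnum (by positivity) (by gcongr)
  calc (1 + ‖x‖) ^ (-(finrank ℝ E + 2 * s)) * ν.real (ball (0 : E) 1)
      = (1 + ‖x‖) ^ (-(finrank ℝ E + 2 * s)) * ν.real (ball (-x) 1) := by
        rw [Measure.addHaar_real_ball_center ν (-x)]
    _ ≤ ∫ z in ball (-x) 1, symmDiffQuot s (barrier s μ) x z ∂ν :=
        setIntegral_ge_of_const_le_real measurableSet_ball measure_ball_lt_top.ne hbound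
          hint.integrableOn
    _ ≤ _ := setIntegral_le_integral hint (.of_forall hnonneg)

theorem exists_forall_le_integral_symmDiffQuot_barrier (hs : s ∈ Ioo (0 : ℝ) 1) (L : ℝ) :
    ∃ μ : ℝ, 1 ≤ μ ∧ ∃ c : ℝ, 0 < c ∧ ∀ x : E, 1 < ‖x‖ → ‖x‖ ≤ L →
      c ≤ ∫ z, symmDiffQuot s (barrier s μ) x z ∂ν := by
  obtain ⟨hs0, hs1⟩ := hs
  set η := min (s / 2) (1 - s)
  have hη : 0 < η := lt_min (by linarith) (by linarith)
  set loss := ∫ z : E, min (‖z‖ ^ (2 * s + η)) 1 / ‖z‖ ^ (finrank ℝ E + 2 * s) ∂ν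
  have hball : 0 < ν.real (ball (0 : E) 1) :=
    ENNReal.toReal_pos (measure_ball_pos ν 0 one_pos).ne' measure_ball_lt_top.ne
  set gain := ν.real (ball (0 : E) 1) * 3 ^ (-(finrank ℝ E + 2 * s))
  have hgain : 0 < gain := by positivity
  set μ := max 1 ((24 * L * loss + 1) / gain)
  have hμ : 1 ≤ μ := le_max_left _ _
  have hμ_gain : 24 * L * loss + 1 ≤ μ * gain := (div_le_iff₀ hgain).1 (le_max_right _ _)
  refine ⟨μ, hμ, min 1 ((1 + |L|) ^ (-(finrank ℝ E + 2 * s)) * ν.real (ball (0 : E) 1)),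
    by positivity, fun x hx hxL => ?_⟩
  obtain ⟨q, hqx⟩ : ∃ q, ‖x‖ ^ 2 = 1 + 2 * q := ⟨(‖x‖ ^ 2 - 1) / 2, by ring⟩
  have hq : 0 < q := by nlinarith
  rcases le_total (μ * q ^ (s / 2)) 1 with hv | hv
  · have hq1 : q ≤ 1 := by
      by_contra! hq1
      nlinarith [Real.one_lt_rpow hq1 (half_pos hs0)]
    calc _ ≤ 1 := min_le_left _ _
      _ ≤ _ := one_le_mul_rpow_sub_of_add_one_le_mul hs0.le hη.le (min_le_left _ _) hμ hq hq1 hx.le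
        hgain.le hμ_gain
      _ ≤ _ := le_integral_symmDiffQuot_barrier_of_le_one ν ⟨hs0, hs1⟩ hη (min_le_right _ _) hμ
        hqx hq hq1 hv hxL
  · have hx1 : barrier s μ x = 1 := by
      rw [barrier_eq_of_norm_sq_eq hqx hq.le, capProfile_of_one_le hv]
    refine (min_le_right _ _).trans (le_trans ?_ (le_integral_symmDiffQuot_barrier_of_eq_one ν
      ⟨hs0, hs1⟩ (zero_le_one.trans hμ) hx hx1))
    gcongr ?_ * _
    exact Real.rpow_le_rpow_of_nonpos (by positivity) (by linarith [le_abs_self L])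
      (neg_nonpos.2 (by positivity))

end Barrier

theorem exists_forall_fracLapEq_barrier {n : ℕ} {s : ℝ} (hn : 0 < n) (hs : s ∈ Ioo (0 : ℝ) 1)
    (L : ℝ) :
    ∃ μ : ℝ, 1 ≤ μ ∧ ∃ c : ℝ, 0 < c ∧ ∀ x : EuclideanSpace ℝ (Fin n), 1 < ‖x‖ → ‖x‖ ≤ L →
      ∃ g : ℝ, fracLapEq n s (barrier s μ) x g ∧ c ≤ g := by
  have : Nonempty (Fin n) := ⟨⟨0, hn⟩⟩
  obtain ⟨μ, hμ, c, hc, hint⟩ := exists_forall_le_integral_symmDiffQuot_barrier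
    (volume : Measure (EuclideanSpace ℝ (Fin n))) hs L
  have hconst : 0 < fracLapConst n s := fracLapConst_pos hs
  refine ⟨μ, hμ, fracLapConst n s * (2⁻¹ * c), by positivity, fun x hx hxL => ⟨_,
    fracLapEq_of_contDiffAt hn hs.2 le_rfl (by linarith [hs.1])
      (continuous_barrier hs.1.le).measurable (abs_barrier_le (zero_le_one.trans hμ))
      (contDiffAt_barrier hx), ?_⟩⟩
  gcongr
  exact hint x hx hxL

/-- **Existence of a supersolution barrier.** There exist `C₁ > 0` and a continuous
radial function `φ₁` such that: `(−Δ)^s φ₁ ≥ 1` in `B₄ \ B₁`; `φ₁ ≡ 0` in `B₁`;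
`0 ≤ φ₁(x) ≤ C₁ (|x| − 1)^s` in `B₄ \ B₁`; and `1 ≤ φ₁ ≤ C₁` outside `B₄`. -/
theorem supersolution_barrier
    (n : ℕ) (hn : 0 < n) (s : ℝ) (hs : s ∈ Set.Ioo (0 : ℝ) 1) :
    ∃ C₁ : ℝ, 0 < C₁ ∧
      ∃ φ₁ : EuclideanSpace ℝ (Fin n) → ℝ,
        Continuous φ₁ ∧
        (∃ g : ℝ → ℝ, ∀ x, φ₁ x = g ‖x‖) ∧
        (∀ x : EuclideanSpace ℝ (Fin n), 1 < ‖x‖ → ‖x‖ < 4 →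
          ∃ v : ℝ, fracLapEq n s φ₁ x v ∧ 1 ≤ v) ∧
        (∀ x : EuclideanSpace ℝ (Fin n), ‖x‖ ≤ 1 → φ₁ x = 0) ∧
        (∀ x : EuclideanSpace ℝ (Fin n), 1 < ‖x‖ → ‖x‖ < 4 →
          0 ≤ φ₁ x ∧ φ₁ x ≤ C₁ * (‖x‖ - 1) ^ s) ∧
        (∀ x : EuclideanSpace ℝ (Fin n), 4 ≤ ‖x‖ → 1 ≤ φ₁ x ∧ φ₁ x ≤ C₁) := by
  have hs0 := hs.1
  obtain ⟨μ, hμ, c, hc, hlap⟩ := exists_forall_fracLapEq_barrier hn hs 4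
  have hμ0 : 0 ≤ μ := zero_le_one.trans hμ
  set M := max 1 c⁻¹
  have hM : 1 ≤ M := le_max_left _ _
  have hMc : 1 ≤ M * c := (inv_le_iff_one_le_mul₀ hc).1 (le_max_right _ _)
  refine ⟨M * (24 * μ ^ 2), by positivity, fun y => M * barrier s μ y,
    (continuous_barrier hs0.le).const_mul M,
    ⟨fun t => M * barrier s μ t, fun x => by simp [barrier]⟩,
    fun x hx hx4 => ?_, fun x hx => ?_, fun x hx hx4 => ⟨?_, ?_⟩, fun x hx => ?_⟩
  · obtain ⟨g, hg, hcg⟩ := hlap x hx hx4.le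
    exact ⟨M * g, hg.const_mul M, hMc.trans (by gcongr)⟩
  · simp [barrier_of_norm_le_one hs0 hx]
  · exact mul_nonneg (by positivity) (barrier_nonneg hμ0 x)
  · have hle := barrier_le_mul_rpow hs0.le hs.2.le hμ0 hx.le hx4.le
    calc M * barrier s μ x ≤ M * (6 * 4 * μ ^ 2 * (‖x‖ - 1) ^ s) := by gcongr
      _ = M * (24 * μ ^ 2) * (‖x‖ - 1) ^ s := by ring
  · simp only [barrier_of_two_le_norm hs0.le hμ (by linarith), mul_one]
    exact ⟨hM, le_mul_of_one_le_right (by positivity) (by nlinarith)⟩
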